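/- arXiv:2412.05250 — 4 statements merged into one kernel-verified Lean document; each statement's English description precedes it below -/
import Mathlib

section
/- Let R be a commutative Noetherian ring of Krull dimension d, and let P be a finitely generated projective R-module such that for every prime ideal p of R the localization P_p is a free R_p-module of rank r, where r > d. Then P is isomorphic to Q ⊕ R^{r−d} for some finitely generated projective R-module Q whose localization at every prime ideal is free of rank d. -/
/-!
By induction on `r - d` it is enough to find a unimodular element of `P`, that is `x ∈ P` and
`f : P → R` linear with `f x = 1`; then `P ≃ ker f × R` and `ker f` has rank `r - 1`.

The unimodular element comes from an argument in the style of Eisenbud and Evans. Realise `P` as a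
direct summand of `R ^ N`, and let `w` be the images in `R ^ N` of `N` generators of `P`. For a prime
`p` let `fibreRank p w` be the dimension of the span of `w` in `κ(p) ^ N`, and let `δ p` be
`dim R / p`. At the start `fibreRank p w ≥ r ≥ δ p + 1` for all `p`. The family `w` is shortened one
vector at a time, replacing `w 0, …, w n` by `w i + a i • w n` for `i < n`, in such a way that a
family of length `n` satisfies `min n (δ p + 1) ≤ fibreRank p w` for all `p`. A family of length one
with this property is a vector which vanishes in no fibre, so it is unimodular.

A shortening step lowers each rank by at most one, so the bound can fail only at primes with
`fibreRank p w = δ p + 1 ≤ n`. Such a prime is a minimal point of the closed set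
`{q | fibreRank q w ≤ δ p + 1}`, as `δ` strictly increases when primes get smaller; since `R` is
Noetherian there are finitely many of them (`finite_setOf_fibreRank_eq`). At these primes the
`n + 1` vectors are linearly dependent in the fibre, and linear algebra together with prime
avoidance yields coefficients `a i` for which no rank is lost (`exists_shear_finset`).
-/

namespace SerreSplitting

open Submodule

/-- The image of `y ∈ R ^ N` in `κ(p) ^ N`, where `κ(p)` is the residue field at `p`. -/
noncomputable def residueVec {R : Type*} [CommRing R] {N : ℕ} (p : PrimeSpectrum R) (y : Fin N → R) :
    Fin N → p.asIdeal.ResidueField :=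
  fun j => algebraMap R p.asIdeal.ResidueField (y j)

/-- The dimension of the subspace of `κ(p) ^ N` spanned by the images of `w 0, …, w (n - 1)`, that
is, the rank at `p` of the matrix with rows `w i`. -/
noncomputable def fibreRank {R : Type*} [CommRing R] {n N : ℕ} (p : PrimeSpectrum R)
    (w : Fin n → Fin N → R) : ℕ :=
  Module.finrank p.asIdeal.ResidueField
    (span p.asIdeal.ResidueField (Set.range fun i => residueVec p (w i)))

/-! ### Row operations over a field -/

/-- If `u` together with `n` vectors `v i` spans a space of dimension at most `n`, then `u` can be
absorbed: adding a nonzero multiple of `u` to suitable `v i` yields vectors whose span contains `u`.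
The choice `b` of the modified indices works for all nonzero multipliers at once, so that it can
be made before the multiplier is lifted from a residue field to the ring. -/
theorem exists_shear {K V : Type*} [Field K] [AddCommGroup V] [Module K V]
    [FiniteDimensional K V] {n : ℕ} (v : Fin n → V) (u : V)
    (h : Module.finrank K (span K (insert u (Set.range v))) ≤ n) :
    ∃ b : Fin n → Bool, ∀ c : K, c ≠ 0 →
      u ∈ span K (Set.range fun i => v i + (if b i then c else 0) • u) := by
  by_cases hu : u ∈ span K (Set.range v)
  · exact ⟨fun _ => false, fun c _ => by simpa using hu⟩
  -- Otherwise `u` accounts for one dimension, so the `v i` are dependent; it suffices to modify one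
  -- `v i` that lies in the span of the others.
  have hdep : ¬ LinearIndependent K v := by
    intro hv
    have h1 := finrank_span_eq_card hv
    have h2 : span K (Set.range v) < span K (insert u (Set.range v)) := by
      refine lt_of_le_of_ne (span_mono (Set.subset_insert _ _)) fun he => hu ?_
      rw [he]; exact subset_span (Set.mem_insert _ _)
    have h3 := Submodule.finrank_lt_finrank_of_lt h2
    simp at h1
    omega
  rw [linearIndependent_iff_notMem_span] at hdep
  push Not at hdep
  obtain ⟨i, hi⟩ := hdep
  refine ⟨fun j => decide (j = i), fun c hc => ?_⟩
  set S := span K (Set.range fun j => v j + (if decide (j = i) then c else 0) • u)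
  have hmem : ∀ j, v j + (if decide (j = i) then c else 0) • u ∈ S :=
    fun j => subset_span ⟨j, rfl⟩
  have hle : span K (v '' (Set.univ \ {i})) ≤ S := by
    rw [span_le]
    rintro _ ⟨j, hj, rfl⟩
    have := hmem j
    have hji : j ≠ i := by simpa using hj
    simpa [hji] using this
  have h1 := hmem i
  have h2 := S.sub_mem h1 (hle hi)
  simp only [decide_true, if_true, add_sub_cancel_left] at h2
  exact (S.smul_mem_iff hc).1 h2

theorem span_insert_le_shear {K V : Type*} [Field K] [AddCommGroup V] [Module K V]
    {n : ℕ} (v : Fin n → V) (u : V) (a : Fin n → K)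
    (h : u ∈ span K (Set.range fun i => v i + a i • u)) :
    span K (insert u (Set.range v)) ≤ span K (Set.range fun i => v i + a i • u) := by
  rw [span_le]
  rintro _ (rfl | ⟨i, rfl⟩)
  · exact h
  · have := sub_mem (subset_span ⟨i, rfl⟩ :
      v i + a i • u ∈ span K (Set.range fun i => v i + a i • u)) (smul_mem _ (a i) h)
    simpa using this

theorem span_insert_le_sup_shear {K V : Type*} [Field K] [AddCommGroup V] [Module K V]
    {n : ℕ} (v : Fin n → V) (u : V) (a : Fin n → K) :
    span K (insert u (Set.range v)) ≤ span K (Set.range fun i => v i + a i • u) ⊔ span K {u} := by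
  rw [span_le]
  rintro _ (rfl | ⟨i, rfl⟩)
  · exact mem_sup_right (mem_span_singleton_self _)
  · have := sub_mem (mem_sup_left (subset_span ⟨i, rfl⟩) :
      v i + a i • u ∈ span K (Set.range fun i => v i + a i • u) ⊔ span K {u})
      (mem_sup_right (smul_mem _ (a i) (mem_span_singleton_self u)))
    simpa using this

/-! ### Row operations and the rank in the fibres -/

section
variable {R : Type*} [CommRing R] {n N : ℕ}

theorem fibreRank_succ (p : PrimeSpectrum R) (w : Fin (n + 1) → Fin N → R) :
    fibreRank p w = Module.finrank p.asIdeal.ResidueField (span p.asIdeal.ResidueField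
      (insert (residueVec p (w (Fin.last n)))
        (Set.range fun i : Fin n => residueVec p (w i.castSucc)))) := by
  rw [fibreRank]
  have h : (Set.range fun i => residueVec p (w i)) = insert (residueVec p (w (Fin.last n)))
      (Set.range fun i : Fin n => residueVec p (w i.castSucc)) := by
    ext x
    simp [Fin.exists_fin_succ', or_comm, eq_comm]
  rw [h]

/-- Row operation `w i + a i • w n` for `i < n`, after which the last row `w n` is dropped. -/
def shear (w : Fin (n + 1) → Fin N → R) (a : Fin n → R) : Fin n → Fin N → R :=
  fun i => w i.castSucc + a i • w (Fin.last n)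

theorem fibreRank_shear (p : PrimeSpectrum R) (w : Fin (n + 1) → Fin N → R) (a : Fin n → R) :
    fibreRank p (shear w a) = Module.finrank p.asIdeal.ResidueField
      (span p.asIdeal.ResidueField (Set.range fun i : Fin n => residueVec p (w i.castSucc) +
        algebraMap R p.asIdeal.ResidueField (a i) • residueVec p (w (Fin.last n)))) := by
  have h : (fun i => residueVec p (shear w a i)) = fun i : Fin n => residueVec p (w i.castSucc) +
      algebraMap R p.asIdeal.ResidueField (a i) • residueVec p (w (Fin.last n)) := by
    ext i j
    simp [residueVec, shear, Algebra.smul_def]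
  rw [fibreRank, h]

theorem fibreRank_le_shear_add_one (p : PrimeSpectrum R) (w : Fin (n + 1) → Fin N → R)
    (a : Fin n → R) : fibreRank p w ≤ fibreRank p (shear w a) + 1 := by
  rw [fibreRank_succ, fibreRank_shear]
  refine (Submodule.finrank_mono (span_insert_le_sup_shear _ _
    fun i => algebraMap R p.asIdeal.ResidueField (a i))).trans ?_
  refine (Submodule.finrank_add_le_finrank_add_finrank _ _).trans ?_
  gcongr
  simpa using finrank_span_le_card (R := p.asIdeal.ResidueField) {residueVec p (w (Fin.last n))}

/-- On finitely many primes where the `n + 1` rows are dependent, one row can be eliminated without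
any loss of rank. -/
theorem exists_shear_finset (w : Fin (n + 1) → Fin N → R) (T : Finset (PrimeSpectrum R))
    (hT : ∀ p ∈ T, fibreRank p w ≤ n) :
    ∃ a : Fin n → R, ∀ p ∈ T, fibreRank p w ≤ fibreRank p (shear w a) := by
  classical
  induction T using Finset.strongInduction with
  | H T ih =>
  obtain rfl | hne := T.eq_empty_or_nonempty
  · exact ⟨0, by simp⟩
  obtain ⟨p, hp⟩ := T.exists_minimal hne
  obtain ⟨a, ha⟩ := ih (T.erase p) (T.erase_ssubset hp.1)
    fun q hq => hT q (Finset.mem_of_mem_erase hq)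
  -- By minimality of `p`, some `c ∉ p` lies in all the other primes of `T`; changing `a` by multiples
  -- of `c` repairs the rank at `p` and does not affect the fibres at the other primes.
  obtain ⟨c, hcT, hcp⟩ : ∃ c ∈ (T.erase p).inf (fun q => q.asIdeal), c ∉ p.asIdeal := by
    rw [← SetLike.not_le_iff_exists, p.2.inf_le']
    rintro ⟨q, hq, hqp⟩
    have h1 : q ≤ p := hqp
    exact Finset.ne_of_mem_erase hq (le_antisymm h1 (hp.2 (Finset.mem_of_mem_erase hq) h1))
  have hc0 : algebraMap R p.asIdeal.ResidueField c ≠ 0 := by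
    rwa [Ne, Ideal.algebraMap_residueField_eq_zero]
  obtain ⟨b, hb⟩ := exists_shear (K := p.asIdeal.ResidueField)
    (fun i => residueVec p (w i.castSucc) +
        algebraMap R p.asIdeal.ResidueField (a i) • residueVec p (w (Fin.last n)))
    (residueVec p (w (Fin.last n))) (by
      refine le_trans ?_ ((fibreRank_succ p w).symm.trans_le (hT p hp.1))
      refine Submodule.finrank_mono ?_
      rw [span_le]
      rintro _ (rfl | ⟨i, rfl⟩)
      · exact subset_span (Set.mem_insert _ _)
      · exact add_mem (subset_span (Set.mem_insert_of_mem _ ⟨i, rfl⟩))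
          (smul_mem _ _ (subset_span (Set.mem_insert _ _))))
  refine ⟨fun i => a i + if b i then c else 0, fun q hq => ?_⟩
  obtain rfl | hqp := eq_or_ne q p
  · rw [fibreRank_succ, fibreRank_shear]
    refine Submodule.finrank_mono (span_insert_le_shear _ _ _ ?_)
    convert hb _ hc0 using 4 with i
    rw [map_add, add_smul, add_assoc]
    split_ifs <;> simp
  · have hq' := Finset.mem_erase.2 ⟨hqp, hq⟩
    refine (ha q hq').trans_eq ?_
    rw [fibreRank_shear, fibreRank_shear]
    have hcq : algebraMap R q.asIdeal.ResidueField c = 0 := by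
      rw [Ideal.algebraMap_residueField_eq_zero]
      exact (Finset.inf_le hq' : _ ≤ q.asIdeal) hcT
    have h : (fun i => residueVec q (w i.castSucc) + algebraMap R q.asIdeal.ResidueField
        (a i + if b i then c else 0) • residueVec q (w (Fin.last n))) =
        fun i => residueVec q (w i.castSucc) + algebraMap R q.asIdeal.ResidueField (a i) •
          residueVec q (w (Fin.last n)) := by
      funext i
      rw [map_add]
      split_ifs <;> simp [hcq]
    rw [h]

/-! ### Semicontinuity of the rank -/

theorem exists_linearIndependent_comp {K V : Type*} [Field K] [AddCommGroup V] [Module K V]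
    {k n : ℕ} (v : Fin n → V) (h : k ≤ Module.finrank K (span K (Set.range v))) :
    ∃ f : Fin k → Fin n, LinearIndependent K fun i => v (f i) := by
  obtain ⟨ι, a, ha, hspan, hli⟩ := exists_linearIndependent' K v
  have := Finite.of_injective a ha
  have := Fintype.ofFinite ι
  rw [← hspan, finrank_span_eq_card hli] at h
  obtain ⟨e⟩ := Function.Embedding.nonempty_of_card_le (α := Fin k) (β := ι) (by simpa using h)
  exact ⟨fun i => a (e i), hli.comp e e.injective⟩

theorem exists_minor_ne_zero {K : Type*} [Field K] {k N : ℕ} (B : Matrix (Fin k) (Fin N) K)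
    (hB : LinearIndependent K B.row) :
    ∃ g : Fin k → Fin N, (Matrix.of fun i j => B i (g j)).det ≠ 0 := by
  have h1 : Module.finrank K (span K (Set.range B.col)) = k := by
    rw [← Matrix.rank_eq_finrank_span_cols, Matrix.rank_eq_finrank_span_row,
      finrank_span_eq_card hB, Fintype.card_fin]
  obtain ⟨g, hg⟩ := exists_linearIndependent_comp B.col h1.ge
  refine ⟨g, ?_⟩
  have h2 := Matrix.linearIndependent_cols_iff_isUnit
    (A := Matrix.of fun i j => B i (g j)) |>.1 hg
  exact ((Matrix.isUnit_iff_isUnit_det _).1 h2).ne_zero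

theorem isOpen_le_fibreRank (k : ℕ) (w : Fin n → Fin N → R) :
    IsOpen {p : PrimeSpectrum R | k ≤ fibreRank p w} := by
  rw [isOpen_iff_forall_mem_open]
  intro p hp
  set κ := p.asIdeal.ResidueField
  obtain ⟨f, hf⟩ := exists_linearIndependent_comp _ hp
  obtain ⟨g, hg⟩ := exists_minor_ne_zero (Matrix.of fun i => residueVec p (w (f i))) hf
  -- The minor `D` is nonzero at `p`, and the rank is at least `k` wherever `D` is nonzero.
  set D : R := (Matrix.of fun i j => w (f i) (g j)).det
  have hD (q : PrimeSpectrum R) : algebraMap R q.asIdeal.ResidueField D =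
      (Matrix.of fun i j => residueVec q (w (f i)) (g j)).det := by
    rw [RingHom.map_det]; rfl
  have hD' (q : PrimeSpectrum R) : q ∈ PrimeSpectrum.basicOpen D ↔
      (Matrix.of fun i j => residueVec q (w (f i)) (g j)).det ≠ 0 := by
    rw [← hD, Ne, Ideal.algebraMap_residueField_eq_zero, PrimeSpectrum.mem_basicOpen]
  refine ⟨PrimeSpectrum.basicOpen D, fun q hq => ?_, (PrimeSpectrum.basicOpen D).2, (hD' p).2 hg⟩
  have h1 := Matrix.linearIndependent_rows_of_det_ne_zero ((hD' q).1 hq)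
  have h2 : LinearIndependent q.asIdeal.ResidueField fun i => residueVec q (w (f i)) :=
    LinearIndependent.of_comp (LinearMap.funLeft _ _ g) h1
  have h3 := finrank_span_eq_card h2
  rw [Fintype.card_fin] at h3
  refine h3.ge.trans (Submodule.finrank_mono (span_mono ?_))
  rintro _ ⟨i, rfl⟩
  exact ⟨f i, rfl⟩

/-! ### Unimodular rows -/

/-- The primes at which eliminating a row could violate the rank bound are finite in number: such a
prime `p` is minimal in the closed locus where the rank is at most `δ p + 1`, because a strictly
smaller prime has larger `δ`, and hence larger rank. -/
theorem finite_setOf_fibreRank_eq [IsNoetherianRing R] (δ : PrimeSpectrum R → ℕ)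
    (hδ : ∀ p q, q < p → δ p < δ q) (w : Fin (n + 1) → Fin N → R)
    (hw : ∀ p, min (n + 1) (δ p + 1) ≤ fibreRank p w) :
    {p : PrimeSpectrum R | fibreRank p w = δ p + 1 ∧ δ p + 1 ≤ n}.Finite := by
  have hZ (s : ℕ) : IsClosed {p : PrimeSpectrum R | fibreRank p w ≤ s} := by
    rw [← isOpen_compl_iff]
    convert isOpen_le_fibreRank (s + 1) w using 1
    ext p
    simp
  choose I hI using fun s => (PrimeSpectrum.isClosed_iff_zeroLocus_ideal _).1 (hZ s)
  have hI' (s : ℕ) (p : PrimeSpectrum R) : fibreRank p w ≤ s ↔ I s ≤ p.asIdeal := by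
    have := Set.ext_iff.1 (hI s) p
    simpa using this
  refine ((Set.finite_Iic n).biUnion (t := fun s => PrimeSpectrum.asIdeal ⁻¹' (I s).minimalPrimes)
    fun s _ => ((I s).finite_minimalPrimes_of_isNoetherianRing R).preimage
      (fun p _ q _ h => PrimeSpectrum.ext h)).subset ?_
  rintro p ⟨hp, hpn⟩
  simp only [Set.mem_iUnion]
  refine ⟨δ p + 1, hpn, ⟨p.2, (hI' _ p).1 hp.le⟩, ?_⟩
  rintro q ⟨hq, hIq⟩ hqp
  by_contra hne
  have hlt : (⟨q, hq⟩ : PrimeSpectrum R) < p := lt_of_le_not_ge hqp hne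
  have h1 := (hI' _ ⟨q, hq⟩).2 hIq
  have h2 := hw ⟨q, hq⟩
  have h3 := hδ _ _ hlt
  omega

/-- Elimination of one row, preserving the rank bound `min n (δ p + 1)`. -/
theorem exists_shear_le [IsNoetherianRing R] (δ : PrimeSpectrum R → ℕ)
    (hδ : ∀ p q, q < p → δ p < δ q) (w : Fin (n + 1) → Fin N → R)
    (hw : ∀ p, min (n + 1) (δ p + 1) ≤ fibreRank p w) :
    ∃ a : Fin n → R, ∀ p, min n (δ p + 1) ≤ fibreRank p (shear w a) := by
  have hfin := finite_setOf_fibreRank_eq δ hδ w hw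
  obtain ⟨a, ha⟩ := exists_shear_finset w hfin.toFinset fun p hp => by
    rw [Set.Finite.mem_toFinset] at hp
    exact hp.1.trans_le hp.2
  refine ⟨a, fun p => ?_⟩
  have h1 := fibreRank_le_shear_add_one p w a
  have h2 := hw p
  by_cases hp : fibreRank p w = δ p + 1 ∧ δ p + 1 ≤ n
  · have := ha p (hfin.mem_toFinset.2 hp)
    omega
  · omega

/-- If the rank of an `(n + 1) × N` matrix is at least `min (n + 1) (δ p + 1)` at every prime `p`, then
its row space contains a unimodular row. -/
theorem exists_mem_span_unimodular [IsNoetherianRing R] (δ : PrimeSpectrum R → ℕ)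
    (hδ : ∀ p q, q < p → δ p < δ q) (w : Fin (n + 1) → Fin N → R)
    (hw : ∀ p, min (n + 1) (δ p + 1) ≤ fibreRank p w) :
    ∃ y ∈ span R (Set.range w), Ideal.span (Set.range y) = ⊤ := by
  induction n with
  | zero =>
    refine ⟨w 0, subset_span ⟨0, rfl⟩, ?_⟩
    by_contra hne
    obtain ⟨m, hm, hle⟩ := Ideal.exists_le_maximal _ hne
    have h1 := hw ⟨m, hm.isPrime⟩
    have h2 : fibreRank ⟨m, hm.isPrime⟩ w = 0 := by
      have h0 : (fun i => residueVec ⟨m, hm.isPrime⟩ (w i)) = 0 := by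
        ext i j
        obtain rfl := Fin.fin_one_eq_zero i
        exact Ideal.algebraMap_residueField_eq_zero.2 (hle (Ideal.subset_span ⟨j, rfl⟩))
      rw [fibreRank, h0]
      simp [Pi.zero_def]
    omega
  | succ n ih =>
    obtain ⟨a, ha⟩ := exists_shear_le δ hδ w hw
    obtain ⟨y, hy, hy'⟩ := ih (shear w a) ha
    refine ⟨y, span_le.2 ?_ hy, hy'⟩
    rintro _ ⟨i, rfl⟩
    exact add_mem (subset_span ⟨_, rfl⟩) (smul_mem _ _ (subset_span ⟨_, rfl⟩))

/-! ### Unimodular elements of projective modules -/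

/-- If `P` is the image of the idempotent `s ∘ g` of `R ^ N`, then the rank of `P` at `p` is bounded by
the rank at `p` of the matrix of `s ∘ g`: base change of `s` identifies `κ(p) ⊗ P` with a subspace
of the row space. -/
theorem rankAtStalk_le_fibreRank {P : Type*} [AddCommGroup P] [Module R P] [Module.Finite R P]
    [Module.Projective R P] (g : (Fin N → R) →ₗ[R] P) (s : P →ₗ[R] (Fin N → R))
    (hgs : ∀ x, g (s x) = x) (p : PrimeSpectrum R) :
    Module.rankAtStalk (R := R) P p ≤ fibreRank p fun i => s (g (Pi.single i 1)) := by
  set κ := p.asIdeal.ResidueField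
  set w : Fin N → Fin N → R := fun i => s (g (Pi.single i 1))
  rw [Module.rankAtStalk_eq]
  let L₀ : P →ₗ[R] (Fin N → κ) := (Algebra.linearMap R κ).compLeft (Fin N) ∘ₗ s
  let L : TensorProduct R κ P →ₗ[κ] (Fin N → κ) := L₀.liftBaseChange κ
  let K : (Fin N → κ) →ₗ[κ] TensorProduct R κ P :=
    Fintype.linearCombination κ fun j => 1 ⊗ₜ g (Pi.single j 1)
  have hL (x : P) : L (1 ⊗ₜ x) = residueVec p (s x) := by
    simp [L, L₀]; rfl
  have hKL : K ∘ₗ L = LinearMap.id := by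
    ext x
    have h : s x = ∑ j, s x j • Pi.single j (1 : R) := pi_eq_sum_univ' _
    simp [hL]
    conv_rhs => rw [← hgs x, h]
    simp only [K, Fintype.linearCombination_apply, residueVec, map_sum, map_smul,
      TensorProduct.tmul_sum, TensorProduct.tmul_smul]
    exact Finset.sum_congr rfl fun j _ => algebraMap_smul κ (s x j) _
  have hinj : Function.Injective L :=
    Function.LeftInverse.injective (g := K) fun z => LinearMap.congr_fun hKL z
  refine (LinearMap.finrank_range_of_inj hinj).symm.trans_le (Submodule.finrank_mono ?_)
  rintro _ ⟨z, rfl⟩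
  induction z using TensorProduct.induction_on with
  | zero => rw [map_zero]; exact zero_mem _
  | add z₁ z₂ h₁ h₂ => rw [map_add]; exact add_mem h₁ h₂
  | tmul c x =>
    have h : s x = ∑ i, s x i • w i := by
      conv_lhs => rw [← hgs x, pi_eq_sum_univ' (s x)]
      simp [w]
    have h' : L (c ⊗ₜ x) = c • ∑ i, algebraMap R κ (s x i) • residueVec p (w i) := by
      rw [← mul_one c, ← smul_eq_mul, ← TensorProduct.smul_tmul', map_smul, hL, smul_eq_mul,
        mul_one, h]
      congr 1
      ext j
      conv_rhs => rw [← h]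
      simp only [residueVec, Finset.sum_apply, Pi.smul_apply, smul_eq_mul, map_sum, map_mul]
      rfl
    rw [h']
    exact smul_mem _ _ (sum_mem fun i _ => smul_mem _ _ (subset_span ⟨i, rfl⟩))

/-- A projective module of constant rank `r > dim R` has a unimodular element. -/
theorem exists_dual_apply_eq_one [IsNoetherianRing R] [Nontrivial R] {d r : ℕ}
    (hdim : ringKrullDim R = d) (hr : d < r) (P : Type*) [AddCommGroup P] [Module R P]
    [Module.Finite R P] [Module.Projective R P] (hrank : ∀ p, Module.rankAtStalk (R := R) P p = r) :
    ∃ (f : P →ₗ[R] R) (x : P), f x = 1 := by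
  obtain ⟨N, g, s, -, -, hgs⟩ := Module.Finite.exists_comp_eq_id_of_projective R P
  have hgs' (x : P) : g (s x) = x := LinearMap.congr_fun hgs x
  have hco (p : PrimeSpectrum R) : Order.coheight p ≤ d := by
    have h := Order.coheight_le_krullDim p
    rw [ringKrullDim] at hdim
    rw [hdim] at h
    exact_mod_cast h
  have hlt (p : PrimeSpectrum R) : Order.coheight p < ⊤ := (hco p).trans_lt (ENat.natCast_lt_top d)
  set w : Fin N → Fin N → R := fun i => s (g (Pi.single i 1))
  have hw (p : PrimeSpectrum R) : r ≤ fibreRank p w := hrank p ▸ rankAtStalk_le_fibreRank g s hgs' p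
  obtain ⟨y, hy, hy1⟩ : ∃ y ∈ span R (Set.range w), Ideal.span (Set.range y) = ⊤ := by
    clear_value w
    cases N with
    -- For `N = 0` the rank would be zero, whereas `r > d ≥ 0`.
    | zero =>
      have h : r ≤ 0 := (hw (Classical.arbitrary _)).trans
        ((finrank_range_le_card _).trans_eq (Fintype.card_fin 0))
      omega
    | succ n =>
      refine exists_mem_span_unimodular (fun p => (Order.coheight p).toNat) (fun p q hqp => ?_) w
        fun p => ?_
      · rw [← Nat.cast_lt (α := ℕ∞), ENat.natCast_toNat (hlt p).ne, ENat.natCast_toNat (hlt q).ne]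
        exact Order.coheight_strictAnti hqp (hlt p)
      · have h1 := hw p
        have h2 : (Order.coheight p).toNat ≤ d := ENat.toNat_le_of_le_natCast (hco p)
        omega
  have hle : span R (Set.range w) ≤ LinearMap.range s := by
    rw [span_le]
    rintro _ ⟨i, rfl⟩
    exact ⟨_, rfl⟩
  obtain ⟨x, rfl⟩ := hle hy
  obtain ⟨c, hc⟩ := Ideal.mem_span_range_iff_exists_fun.1 ((Ideal.eq_top_iff_one _).1 hy1)
  refine ⟨Fintype.linearCombination R c ∘ₗ s, x, ?_⟩
  rw [← hc]
  simp [Fintype.linearCombination_apply, mul_comm]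

/-! ### Splitting off free summands -/

/-- The splitting `P ≃ ker f × R` given by an element `x` with `f x = 1`. -/
def kerProdEquiv {P : Type*} [AddCommGroup P] [Module R P] (f : P →ₗ[R] R) (x : P)
    (hx : f x = 1) : P ≃ₗ[R] LinearMap.ker f × R where
  toFun y := (⟨y - f y • x, by simp [hx]⟩, f y)
  map_add' y z := by
    ext
    · simp [add_smul]; abel
    · simp
  map_smul' a y := by
    ext
    · simp [smul_sub, mul_smul]
    · simp
  invFun z := z.1 + z.2 • x
  left_inv y := by simp
  right_inv z := by
    obtain ⟨⟨y, hy⟩, a⟩ := z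
    rw [LinearMap.mem_ker] at hy
    simp [hx, hy]

theorem rankAtStalk_fst [IsNoetherianRing R] [Nontrivial R] {P Q : Type*} [AddCommGroup P]
    [Module R P] [Module.Finite R P] [Module.Projective R P] [AddCommGroup Q] [Module R Q]
    {d k : ℕ} (e : P ≃ₗ[R] Q × (Fin k → R))
    (hrank : ∀ p, Module.rankAtStalk (R := R) P p = d + k) :
    Module.Finite R Q ∧ Module.Projective R Q ∧ ∀ p, Module.rankAtStalk (R := R) Q p = d := by
  have h1 : Module.Finite R Q := Module.Finite.of_surjective
    (LinearMap.fst R Q (Fin k → R) ∘ₗ e.toLinearMap) (Prod.fst_surjective.comp e.surjective)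
  have h2 : Module.Projective R Q := Module.Projective.of_split
    (e.symm.toLinearMap ∘ₗ LinearMap.inl R Q _) (LinearMap.fst R Q _ ∘ₗ e.toLinearMap)
    (by ext; simp)
  refine ⟨h1, h2, fun p => ?_⟩
  have h3 := hrank p
  rw [Module.rankAtStalk_eq_of_equiv e, Module.rankAtStalk_prod, Pi.add_apply,
    Module.rankAtStalk_eq_finrank_of_free (M := Fin k → R)] at h3
  simpa using h3

theorem exists_submodule_equiv_prod [IsNoetherianRing R] [Nontrivial R] {d : ℕ}
    (hdim : ringKrullDim R = d) (k : ℕ) (P : Type*) [AddCommGroup P] [Module R P]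
    [Module.Finite R P] [Module.Projective R P]
    (hrank : ∀ p, Module.rankAtStalk (R := R) P p = d + k) :
    ∃ Q : Submodule R P, Nonempty (P ≃ₗ[R] Q × (Fin k → R)) := by
  induction k generalizing P with
  | zero => exact ⟨⊤, ⟨topEquiv.symm ≪≫ₗ (LinearEquiv.prodUnique (R := R) (M := (⊤ : Submodule R P))
      (M₂ := Fin 0 → R)).symm⟩⟩
  | succ k ih =>
    obtain ⟨f, x, hx⟩ := exists_dual_apply_eq_one hdim (by omega) P hrank
    have e := kerProdEquiv f x hx
    have e₁ : (Fin (k + 1) → R) ≃ₗ[R] (Fin k → R) × R := LinearEquiv.ofFinrankEq _ _ (by simp)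
    have e₂ : (Fin 1 → R) ≃ₗ[R] R := LinearEquiv.ofFinrankEq _ _ (by simp)
    obtain ⟨_, _, h3⟩ := rankAtStalk_fst (d := d + k)
      (e ≪≫ₗ (LinearEquiv.refl R _).prodCongr e₂.symm) hrank
    obtain ⟨Q, ⟨e₃⟩⟩ := ih (LinearMap.ker f) h3
    have e₄ := Q.equivMapOfInjective (LinearMap.ker f).subtype (LinearMap.ker f).subtype_injective
    exact ⟨Q.map (LinearMap.ker f).subtype, ⟨e ≪≫ₗ e₃.prodCongr (LinearEquiv.refl R R) ≪≫ₗ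
      LinearEquiv.prodAssoc R _ _ _ ≪≫ₗ e₄.prodCongr e₁.symm⟩⟩
end

end SerreSplitting

/-- Serre's splitting theorem: over a commutative Noetherian ring of Krull dimension `d`, a
finitely generated projective module whose localization at every prime is free of rank `r > d`
splits off a free direct summand of rank `r - d`, the complement having constant rank `d`. -/
theorem serre_splitting
    (R : Type u) [CommRing R] [IsNoetherianRing R] (d r : ℕ)
    (hdim : ringKrullDim R = d) (hr : d < r)
    (P : Type u) [AddCommGroup P] [Module R P] [Module.Finite R P]
    (hP : Module.Projective R P)
    (hrank : ∀ (p : Ideal R) [p.IsPrime],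
      Module.Free (Localization.AtPrime p) (LocalizedModule p.primeCompl P) ∧
      Module.finrank (Localization.AtPrime p) (LocalizedModule p.primeCompl P) = r) :
    ∃ Q : Submodule R P,
      Module.Finite R Q ∧ Module.Projective R Q ∧
      (∀ (p : Ideal R) [p.IsPrime],
        Module.Free (Localization.AtPrime p) (LocalizedModule p.primeCompl Q) ∧
        Module.finrank (Localization.AtPrime p) (LocalizedModule p.primeCompl Q) = d) ∧
      Nonempty (P ≃ₗ[R] Q × (Fin (r - d) → R)) := by
  have : Nontrivial R := by
    by_contra h
    rw [not_nontrivial_iff_subsingleton] at h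
    rw [ringKrullDim_eq_bot_of_subsingleton] at hdim
    exact WithBot.bot_ne_coe hdim
  have hrank' (p : PrimeSpectrum R) : Module.rankAtStalk (R := R) P p = d + (r - d) := by
    rw [Nat.add_sub_of_le hr.le]
    exact (hrank p.asIdeal).2
  obtain ⟨Q, ⟨e⟩⟩ := SerreSplitting.exists_submodule_equiv_prod hdim (r - d) P hrank'
  obtain ⟨h1, h2, h3⟩ := SerreSplitting.rankAtStalk_fst e hrank'
  exact ⟨Q, h1, h2, fun p hp => ⟨Module.free_of_flat_of_isLocalRing, h3 ⟨p, hp⟩⟩, ⟨e⟩⟩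
end

section
/- Let k be a field. Every finitely generated projective module over the polynomial ring k[X, Y] in two variables is free. -/
/-!
Let `A` be a principal ideal domain with field of fractions `K`, and let `P` be a finitely
generated projective module over `A[X]`; for `A = k[Y]` this is the situation of the theorem.

Since `K[X]` is a principal ideal domain, `K[X] ⊗ P` is free, and clearing denominators in a basis
gives a free submodule `F₀ ⊆ P` such that every element of `P` is moved into `F₀` by some nonzero
`s ∈ A`. As `P` is Noetherian, there is a maximal `F` among the free submodules of the same rank
containing `F₀`. It is enough to see that `C p • z ∈ F` implies `z ∈ F` for every prime `p` of `A`: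
removing the prime factors of `s` one at a time then shows `F = P`.

Suppose `C p • z ∈ F` with `z ∉ F`, and let `v` be the coordinate vector of `C p • z` in a basis
of `F`. It is nonzero modulo `p`. As `(A/p)[X]` is a Euclidean domain, elementary operations, which
lift from `(A/p)[X]` to `A[X]`, bring the reduction of `v` to the form `g • eᵢ` with `g ≠ 0`
(`exists_equiv_reduction`). So, for the `i`-th member `bᵢ` of the new basis of `F`, a multiple of
`bᵢ` by an element prime to `p` lies in `p P`. Because `P / p P` is projective, hence torsion-free,
over the domain `A[X] / p` (`dvd_smul_mem_of_projective`), `bᵢ = p y` for some `y ∈ P`. Replacing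
`bᵢ` by `y` gives a strictly larger free submodule of the same rank, contradicting maximality.
-/

open Polynomial TensorProduct

/-- A finitely generated projective module that becomes free over a localization `B` contains a free
submodule which is cofinal up to denominators in `S`; here `B` is a principal ideal domain, which
makes the localized module free. -/
theorem exists_free_submodule_of_isLocalization
    {R B P : Type*} [CommRing R] [IsDomain R] [CommRing B] [IsDomain B] [IsPrincipalIdealRing B]
    [Algebra R B] (S : Submonoid R) (hS : S ≤ nonZeroDivisors R) [IsLocalization S B]
    [AddCommGroup P] [Module R P] [Module.Finite R P] [Module.Projective R P] :
    ∃ (n : ℕ) (φ : (Fin n → R) →ₗ[R] P), Function.Injective φ ∧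
      ∀ z, ∃ s ∈ S, s • z ∈ LinearMap.range φ := by
  let f : P →ₗ[R] B ⊗[R] P := TensorProduct.mk R B P 1
  have : IsLocalizedModule S f :=
    (isLocalizedModule_iff_isBaseChange S B f).mpr (TensorProduct.isBaseChange R P B)
  have : Module.Free B (B ⊗[R] P) := inferInstance
  let b := Module.finBasis B (B ⊗[R] P)
  obtain ⟨c, hc⟩ := IsLocalizedModule.exist_integer_multiples_of_finite S f b
  choose m hm using hc
  have hinj : Function.Injective (algebraMap R B) := IsLocalization.injective B hS
  have hfφ (x) : f (Fintype.linearCombination R m x) =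
      ∑ i, algebraMap R B (x i * c) • b i := by
    simp only [Fintype.linearCombination_apply, map_sum, map_smul, hm, smul_smul, algebraMap_smul]
  refine ⟨_, Fintype.linearCombination R m, ?_, fun z ↦ ?_⟩
  · rw [injective_iff_map_eq_zero]
    intro x hx
    have h0 := hfφ x
    rw [hx, map_zero, eq_comm] at h0
    have h1 := Fintype.linearIndependent_iff.mp b.linearIndependent _ h0
    funext i
    have h2 : x i * c = 0 := hinj (by rw [h1 i, map_zero])
    exact (mul_eq_zero.mp h2).resolve_right (nonZeroDivisors.ne_zero (hS c.2))
  · obtain ⟨s, hs⟩ := IsLocalization.exist_integer_multiples_of_finite S (b.repr (f z))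
    choose a ha using hs
    have key : f ((s * c : R) • z) = f (Fintype.linearCombination R m a) := by
      rw [hfφ, map_smul, ← b.sum_repr (f z), Finset.smul_sum]
      refine Finset.sum_congr rfl fun i _ ↦ ?_
      rw [map_mul, ha, ← algebraMap_smul B, smul_smul, Algebra.smul_def, map_mul]
      congr 1
      ring
    obtain ⟨t, ht⟩ := IsLocalizedModule.exists_of_eq (S := S) key
    refine ⟨t * (s * c), S.mul_mem t.2 (S.mul_mem s.2 c.2), (t : R) • a, ?_⟩
    rw [map_smul, mul_smul]
    exact ht.symm

/-- Gaussian elimination modulo `ker π`: if the quotient is a polynomial ring over a field, some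
automorphism of `R ^ ι` (a product of transvections) turns `v` into a vector having at most one
coordinate that is nonzero in the quotient. -/
theorem exists_equiv_reduction
    {R F ι : Type*} [CommRing R] [Field F] [Fintype ι] [DecidableEq ι] (π : R →+* F[X])
    (hπ : Function.Surjective π) (v : ι → R) :
    ∃ e : (ι → R) ≃ₗ[R] (ι → R), ∀ i j, i ≠ j → π (e v i) = 0 ∨ π (e v j) = 0 := by
  classical
  -- The sum over the coordinates of this size, which vanishes only at `0`, drops at each division.
  let μ : F[X] → ℕ := fun q ↦ if q = 0 then 0 else q.natDegree + 1
  induction hN : ∑ i, μ (π (v i)) using Nat.strong_induction_on generalizing v with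
  | _ N ih =>
  by_cases hdone : ∀ i j, i ≠ j → π (v i) = 0 ∨ π (v j) = 0
  · exact ⟨LinearEquiv.refl R _, hdone⟩
  push Not at hdone
  obtain ⟨i, j, hij, hi, hj⟩ := hdone
  wlog hdeg : (π (v j)).natDegree ≤ (π (v i)).natDegree generalizing i j
  · exact this j i hij.symm hj hi (le_of_not_ge hdeg)
  obtain ⟨q, hq⟩ := hπ (π (v i) / π (v j))
  have h0 : (-q • LinearMap.proj (R := R) (φ := fun _ : ι ↦ R) j) (Pi.single i 1) = 0 := by
    simp [hij.symm]
  let e₁ := LinearEquiv.transvection h0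
  have he₁ : e₁ v = Function.update v i (v i - q * v j) := by
    funext l
    rcases eq_or_ne l i with rfl | hl
    · simp [e₁, LinearMap.transvection.apply]; ring
    · simp [e₁, LinearMap.transvection.apply, hl]
  have hlt : ∑ l, μ (π (e₁ v l)) < N := by
    rw [← hN, he₁]
    have hi_lt : μ (π (v i - q * v j)) < μ (π (v i)) := by
      have hmod : π (v i - q * v j) = π (v i) % π (v j) := by
        rw [map_sub, map_mul, hq, EuclideanDomain.mod_eq_sub_mul_div, mul_comm]
      simp only [μ, hmod, if_neg hi]
      split_ifs with h
      · omega
      · have := Polynomial.natDegree_lt_natDegree h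
          (EuclideanDomain.mod_lt (π (v i)) hj)
        omega
    refine Finset.sum_lt_sum (fun l _ ↦ ?_) ⟨i, Finset.mem_univ _, by simpa using hi_lt⟩
    rcases eq_or_ne l i with rfl | hl
    · simpa using hi_lt.le
    · simp [hl]
  obtain ⟨e, he⟩ := ih _ hlt (e₁ v) rfl
  exact ⟨e₁.trans e, he⟩

/-- For `P` projective and `p` prime, `P / p P` is torsion-free over the domain `R / p`: this is
checked coordinatewise after embedding `P` as a direct summand of a free module. -/
theorem dvd_smul_mem_of_projective {R P : Type*} [CommRing R] [AddCommGroup P] [Module R P]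
    [Module.Projective R P] {p g : R} (hp : Prime p) (hg : ¬ p ∣ g) {m z : P}
    (h : g • m = p • z) : ∃ y, m = p • y := by
  obtain ⟨s, hs⟩ := Module.projective_def.mp ‹Module.Projective R P›
  have hd (i) : p ∣ s m i := by
    refine (hp.dvd_or_dvd (a := g) ⟨s z i, ?_⟩).resolve_left hg
    simpa using DFunLike.congr_fun (congrArg s h) i
  choose c hc using hd
  refine ⟨∑ i ∈ (s m).support, c i • i, ?_⟩
  conv_lhs => rw [← hs m, Finsupp.linearCombination_apply, Finsupp.sum]
  rw [Finset.smul_sum]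
  exact Finset.sum_congr rfl fun i _ ↦ by rw [hc, mul_smul, id]


/-- **Seshadri's theorem**: finitely generated projective modules over `A[X]` are free when `A` is a
principal ideal domain. -/
theorem free_of_projective_polynomial_pid
    {A P : Type*} [CommRing A] [IsDomain A] [IsPrincipalIdealRing A]
    [AddCommGroup P] [Module A[X] P] [Module.Finite A[X] P] [Module.Projective A[X] P] :
    Module.Free A[X] P := by
  have : Module.IsTorsionFree A[X] P := inferInstance
  have : IsNoetherian A[X] P := inferInstance
  obtain ⟨n, φ₀, hφ₀, hs₀⟩ : ∃ (n : ℕ) (φ : (Fin n → A[X]) →ₗ[A[X]] P), Function.Injective φ ∧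
      ∀ z, ∃ s : A, s ≠ 0 ∧ C s • z ∈ LinearMap.range φ := by
    let := Polynomial.algebra A (FractionRing A)
    have := Polynomial.isLocalization (nonZeroDivisors A) (FractionRing A)
    obtain ⟨n, φ, hφ, h⟩ := exists_free_submodule_of_isLocalization (B := (FractionRing A)[X])
      (P := P) ((nonZeroDivisors A).map (C : A →+* A[X])) (by
        rintro _ ⟨a, ha, rfl⟩
        exact mem_nonZeroDivisors_of_ne_zero (C_ne_zero.mpr (nonZeroDivisors.ne_zero ha)))
    refine ⟨n, φ, hφ, fun z ↦ ?_⟩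
    obtain ⟨_, ⟨a, ha, rfl⟩, hz⟩ := h z
    exact ⟨a, nonZeroDivisors.ne_zero ha, hz⟩
  obtain ⟨M, ⟨φ, hφ, rfl, hle⟩, hmax⟩ := set_has_maximal_iff_noetherian.mpr ‹IsNoetherian A[X] P›
    {M | ∃ φ : (Fin n → A[X]) →ₗ[A[X]] P, Function.Injective φ ∧ LinearMap.range φ = M ∧
      LinearMap.range φ₀ ≤ LinearMap.range φ} ⟨_, φ₀, hφ₀, rfl, le_rfl⟩
  have hprime (p : A) (hp : Prime p) (z : P) (hz : C p • z ∈ LinearMap.range φ) :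
      z ∈ LinearMap.range φ := by
    have hCp : Prime (C p) := Polynomial.prime_C_iff.mpr hp
    obtain ⟨v, hv⟩ := hz
    by_contra hzF
    let I := Ideal.span {p}
    have : I.IsMaximal :=
      PrincipalIdealRing.isMaximal_of_irreducible hp.irreducible
    let : Field (A ⧸ I) := Ideal.Quotient.field I
    let π : A[X] →+* (A ⧸ I)[X] := mapRingHom (Ideal.Quotient.mk I)
    have hπ0 (q : A[X]) : π q = 0 ↔ C p ∣ q := by
      simp only [π, C_dvd_iff_dvd_coeff, Polynomial.ext_iff, coe_mapRingHom, coeff_map,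
        coeff_zero, Ideal.Quotient.eq_zero_iff_mem, I, Ideal.mem_span_singleton]
    obtain ⟨e, he⟩ := exists_equiv_reduction π
      (map_surjective _ Ideal.Quotient.mk_surjective) v
    simp only [hπ0] at he
    -- `v` is not divisible by `p`, since `P` is torsion-free and `z` is not in the range of `φ`.
    obtain ⟨i, hi⟩ : ∃ i, ¬ C p ∣ e v i := by
      by_contra! hall
      choose w hw using hall
      refine hzF ⟨e.symm w, ?_⟩
      have : e v = C p • w := funext hw
      have hv' : v = C p • e.symm w := by rw [← map_smul, ← this, e.symm_apply_apply]
      rw [hv', map_smul] at hv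
      exact smul_right_injective P hCp.ne_zero hv
    have hrest (j) : ∃ w, j ≠ i → e v j = C p * w := by
      by_cases hj : j = i
      · exact ⟨0, fun h ↦ (h hj).elim⟩
      · obtain ⟨w, hw⟩ := (he j i hj).resolve_right hi
        exact ⟨w, fun _ ↦ hw⟩
    choose w hw using hrest
    -- `ψ` is the parametrization of the range of `φ` by the new basis `ψ (Pi.single j 1)`.
    let ψ := φ ∘ₗ e.symm.toLinearMap
    have hψ : Function.Injective ψ := hφ.comp e.symm.injective
    have hrange : LinearMap.range ψ = LinearMap.range φ :=
      LinearMap.range_comp_of_range_eq_top _ (LinearMap.range_eq_top.mpr e.symm.surjective)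
    have hev : e v = e v i • Pi.single i 1 + C p • Function.update w i 0 := by
      funext j
      rcases eq_or_ne j i with rfl | hj
      · simp
      · simp [hj, hw j hj]
    obtain ⟨y, hy⟩ : ∃ y, ψ (Pi.single i 1) = C p • y := by
      refine dvd_smul_mem_of_projective (z := z - ψ (Function.update w i 0)) hCp hi ?_
      rw [smul_sub, ← hv, ← map_smul, ← map_smul, eq_sub_iff_add_eq, ← map_add, ← hev]
      simp [ψ]
    -- `θ` arises from `ψ` by replacing the `i`-th basis vector `C p • y` by `y`.
    let δ := LinearMap.proj (R := A[X]) (φ := fun _ : Fin n ↦ A[X]) i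
    let θ : (Fin n → A[X]) →ₗ[A[X]] P := ψ + δ.smulRight (y - ψ (Pi.single i 1))
    have hθ (x) : θ x = ψ x + x i • (y - ψ (Pi.single i 1)) := rfl
    have hpθ (x) : C p • θ x = ψ (C p • x + (x i - C p * x i) • Pi.single i 1) := by
      rw [hθ, map_add, map_smul, map_smul]
      have : C p • x i • y = x i • ψ (Pi.single i 1) := by rw [hy, smul_comm]
      rw [smul_add, smul_sub, smul_sub, this]
      module
    have hθinj : Function.Injective θ := by
      rw [injective_iff_map_eq_zero]
      intro x hx
      have h0 := hpθ x
      rw [hx, smul_zero, eq_comm] at h0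
      have h1 := (injective_iff_map_eq_zero ψ).mp hψ _ h0
      funext j
      have h2 := congrFun h1 j
      rcases eq_or_ne j i with rfl | hj
      · simpa using h2
      · simpa [hj, hp.ne_zero] using h2
    have hθ_range : LinearMap.range ψ ≤ LinearMap.range θ := by
      rintro _ ⟨x, rfl⟩
      refine ⟨x + (C p * x i - x i) • Pi.single i 1, ?_⟩
      simp only [hθ, map_add, map_smul, Pi.add_apply, Pi.smul_apply, Pi.single_eq_same,
        smul_eq_mul, mul_one, hy]
      module
    have hyθ : y ∈ LinearMap.range θ := ⟨Pi.single i 1, by simp [hθ]⟩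
    have hyψ : y ∉ LinearMap.range ψ := by
      rintro ⟨u, rfl⟩
      rw [← map_smul] at hy
      have := congrFun (hψ hy) i
      exact hCp.not_isUnit (isUnit_of_dvd_one ⟨u i, by simpa using this⟩)
    rw [hrange] at hθ_range hyψ
    exact hmax _ ⟨θ, hθinj, rfl, hle.trans hθ_range⟩
      (lt_of_le_of_ne hθ_range fun h ↦ hyψ (h ▸ hyθ))
  have hsat (s : A) (hs : s ≠ 0) : ∀ z, C s • z ∈ LinearMap.range φ → z ∈ LinearMap.range φ := by
    induction s using UniqueFactorizationMonoid.induction_on_prime with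
    | h₁ => exact absurd rfl hs
    | h₂ u hu =>
      intro z hz
      obtain ⟨u, rfl⟩ := hu
      have := Submodule.smul_mem _ (C (↑u⁻¹ : A)) hz
      rwa [smul_smul, ← C_mul, Units.inv_mul, C_1, one_smul] at this
    | h₃ a p ha hp ih =>
      intro z hz
      rw [C_mul, mul_smul] at hz
      exact ih ha z (hprime p hp _ hz)
  have hsurj : Function.Surjective φ := fun z ↦ by
    obtain ⟨s, hs, hz⟩ := hs₀ z
    exact hsat s hs z (hle hz)
  exact Module.Free.of_equiv (LinearEquiv.ofBijective φ ⟨hφ, hsurj⟩)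

/-- Every finitely generated projective module over the polynomial ring `k[X, Y]`
in two variables over a field `k` is free (Seshadri, 1958). -/
theorem projective_free_over_two_variable_polynomial_ring
    (k : Type*) [Field k]
    (P : Type*) [AddCommGroup P] [Module (MvPolynomial (Fin 2) k) P]
    [Module.Finite (MvPolynomial (Fin 2) k) P]
    (hP : Module.Projective (MvPolynomial (Fin 2) k) P) :
    Module.Free (MvPolynomial (Fin 2) k) P := by
  let A := MvPolynomial (Fin 1) k
  have : IsPrincipalIdealRing A :=
    .of_surjective _ (MvPolynomial.uniqueAlgEquiv k (Fin 1)).symm.surjective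
  -- The module structure is transported along `k[X, Y] ≃ k[Y][X]`.
  let ε : MvPolynomial (Fin 2) k ≃+* A[X] := (MvPolynomial.finSuccEquiv k 1).toRingEquiv
  let : Module A[X] P := Module.compHom P ε.symm.toRingHom
  let := RingHomInvPair.of_ringEquiv ε
  let := RingHomInvPair.symm (ε : MvPolynomial (Fin 2) k →+* A[X]) ε.symm
  let e : P ≃ₛₗ[(ε : MvPolynomial (Fin 2) k →+* A[X])] P :=
    { AddEquiv.refl P with
      map_smul' := fun r x ↦ by
        change r • x = ε.symm (ε r) • x
        rw [ε.symm_apply_apply] }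
  have : Module.Projective A[X] P := .of_equiv e
  have : Module.Finite A[X] P := Module.Finite.of_surjective e.toLinearMap e.surjective
  have : Module.Free A[X] P := free_of_projective_polynomial_pid
  exact .of_equiv e.symm
end

section
/- Let C be a chain complex of abelian groups in which every term C_n is a free abelian group, and let G be an abelian group. For every integer n there is a short exact sequence of abelian groups 0 → Ext¹_ℤ(H_{n−1}(C), G) → H^n(Hom(C, G)) → Hom(H_n(C), G) → 0, where Hom(C, G) denotes the cochain complex with n-th term Hom_ℤ(C_n, G) and differentials obtained by precomposing with those of C. -/
/-!
The argument is the classical one. Write `Z_m`, `B_m`, `H_m` for cycles, boundaries and homology.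

A submodule of a projective `ℤ`-module is projective, because a quotient of an injective
`ℤ`-module is divisible, hence injective (`UCT.projective_of_mono`). So `Z_{n-1}` and `B_{n-1}` are
projective, and each `Z_m` is a direct summand of `C_m`, the quotient `C_m / Z_m` being isomorphic
to a submodule of `C_{m-1}` (`UCT.exists_retraction`).

The resolution `0 → B_{n-1} → Z_{n-1} → H_{n-1} → 0` therefore exhibits `Ext¹(H_{n-1}, G)` as the
cokernel of `Hom(Z_{n-1}, G) → Hom(B_{n-1}, G)` (`UCT.exists_ext_presentation`). Since `Z_{n-1}` is
a direct summand of `C_{n-1}`, a map `B_{n-1} → G` extends to `Z_{n-1}` if and only if it extends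
to `C_{n-1}`; precomposition with `C_n → B_{n-1}` thus induces an injection of
`Ext¹(H_{n-1}, G)` into `H^n(Hom(C, G))`. Restricting an `n`-cocycle to `Z_n` gives the map to
`Hom(H_n, G)`. It is surjective because `Z_n` is a direct summand of `C_n`, and a cocycle is in its
kernel exactly when it vanishes on `Z_n`, that is, when it factors through `C_n → B_{n-1}`. This
is `UCT.exists_shortExact`, which only uses that subobjects of projectives are projective and is
stated in an abelian category with that property.
-/

open CategoryTheory

namespace UCT

/-! ### Subgroups of projective abelian groups -/

lemma divisible_of_injective (I : ModuleCat.{0} ℤ) [Injective I] {n : ℤ} (hn : n ≠ 0) (x : I) :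
    ∃ y : I, n • y = x := by
  have hm : Mono (ModuleCat.ofHom (LinearMap.toSpanSingleton ℤ ℤ n)) := by
    rw [ModuleCat.mono_iff_injective]
    intro a b h
    simpa [hn] using h
  let u : ModuleCat.of ℤ ℤ ⟶ I := ModuleCat.ofHom (LinearMap.toSpanSingleton ℤ I x)
  let v := Injective.factorThru u (ModuleCat.ofHom (LinearMap.toSpanSingleton ℤ ℤ n))
  refine ⟨v (1 : ℤ), ?_⟩
  have h := congr($(Injective.comp_factorThru u
    (ModuleCat.ofHom (LinearMap.toSpanSingleton ℤ ℤ n))) (1 : ℤ))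
  have h2 : v (LinearMap.toSpanSingleton ℤ ℤ n 1) = LinearMap.toSpanSingleton ℤ I x 1 := h
  rw [LinearMap.toSpanSingleton_apply_one, LinearMap.toSpanSingleton_apply_one] at h2
  rw [← h2]
  have h3 : v (n • (1 : ℤ)) = n • v (1 : ℤ) := map_zsmul v.hom n (1 : ℤ)
  rw [← h3, smul_eq_mul, mul_one]

lemma injective_of_divisible (A : Type) [AddCommGroup A] [DivisibleBy A ℤ] (inst : Module ℤ A) :
    Module.Injective ℤ A := by
  obtain rfl : inst = AddCommGroup.toIntModule A := Subsingleton.elim _ _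
  exact (Module.Baer.of_divisible A).injective

/-- Over `ℤ`, a quotient of an injective module is injective. -/
lemma injective_of_epi {I Q : ModuleCat.{0} ℤ} [Injective I] (p : I ⟶ Q) [Epi p] :
    Injective Q := by
  have hp : Function.Surjective p := (ModuleCat.epi_iff_surjective p).mp inferInstance
  let _ : DivisibleBy Q ℤ := divisibleByOfSMulRightSurj _ _ fun {n} hn q ↦ by
    obtain ⟨x, rfl⟩ := hp q
    obtain ⟨y, rfl⟩ := divisible_of_injective I hn x
    exact ⟨p y, (map_zsmul p.hom n y).symm⟩
  exact Module.injective_object_of_injective_module (inj := injective_of_divisible Q _)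

/-- Over `ℤ`, a submodule `K` of a projective module `F` is projective. To lift `f : K ⟶ X` along an
epimorphism `e : E ⟶ X`, embed `E` in an injective `J`. Then `X` embeds in `J / ker e`, which is
injective, so `f` extends to `F ⟶ J / ker e` and lifts to `F ⟶ J`; the restriction of the lift
to `K` has values in `E`. -/
theorem projective_of_mono {K F : ModuleCat.{0} ℤ} (m : K ⟶ F) [Mono m] [Projective F] :
    Projective K := by
  refine ⟨fun {E X} f e _ ↦ ?_⟩
  let j := Injective.ι E
  let N := Limits.kernel.ι e ≫ j
  let π := Limits.cokernel.π N
  have : Injective (Limits.cokernel N) := injective_of_epi π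
  have hjπ : Limits.kernel.ι e ≫ j ≫ π = 0 := by
    rw [← Category.assoc]; exact Limits.cokernel.condition N
  let t : X ⟶ Limits.cokernel N := Abelian.epiDesc e (j ≫ π) hjπ
  have ht : e ≫ t = j ≫ π := Abelian.comp_epiDesc e (j ≫ π) hjπ
  have : Mono t := by
    have hex : (ShortComplex.mk N π (Limits.cokernel.condition N)).Exact :=
      ShortComplex.exact_of_g_is_cokernel _ (Limits.cokernelIsCokernel N)
    rw [ShortComplex.moduleCat_exact_iff] at hex
    rw [ModuleCat.mono_iff_injective, injective_iff_map_eq_zero]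
    intro x hx
    obtain ⟨y, rfl⟩ := (ModuleCat.epi_iff_surjective e).mp inferInstance x
    have h1 : π (j y) = 0 := by
      rw [← hx]; exact (congr($ht y)).symm
    obtain ⟨k, hk⟩ := hex (j y) h1
    have h2 : Limits.kernel.ι e k = y :=
      (ModuleCat.mono_iff_injective j).mp inferInstance hk
    rw [← h2]
    exact congr($(Limits.kernel.condition e) k)
  let h := Injective.factorThru (f ≫ t) m
  let u := m ≫ Projective.factorThru h π
  have hu : u ≫ π = f ≫ t := by simp [u, h]
  let c := Limits.cokernel.π j
  let c' : Limits.cokernel N ⟶ Limits.cokernel j :=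
    Limits.cokernel.desc N c (by simp [N, c])
  have hc : π ≫ c' = c := Limits.cokernel.π_desc _ _ _
  have htc : t ≫ c' = 0 := by
    rw [← cancel_epi e, ← Category.assoc, ht, Category.assoc, hc]; simp [c]
  have huc : u ≫ c = 0 := by
    rw [← hc, ← Category.assoc, hu, Category.assoc, htc, Limits.comp_zero]
  refine ⟨Abelian.monoLift j u huc, ?_⟩
  rw [← cancel_mono t, Category.assoc, ht, ← Category.assoc, Abelian.monoLift_comp, hu]

open scoped ZeroObject

/-! ### Two-term resolutions and `Ext¹` -/

/-- The objects of the complex `K → P` placed in degrees `1` and `0`. -/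
noncomputable def twoTermX {A : Type 1} [Category.{0} A] [Abelian A] (K P : A) : ℕ → A
  | 0 => P
  | 1 => K
  | _ + 2 => 0

/-- The chain complex `⋯ → 0 → K → P` given by a morphism `i : K ⟶ P`, with `P` in degree `0`. -/
noncomputable def twoTerm {A : Type 1} [Category.{0} A] [Abelian A] {K P : A}
    (i : K ⟶ P) : ChainComplex A ℕ where
  X := twoTermX K P
  d
    | 1, 0 => i
    | _, _ => 0
  shape := by
    rintro (_ | _ | a) (_ | b) h <;> first | rfl | simp at h
  d_comp_d' := by
    rintro (_ | _ | a) (_ | b) (_ | c) h h' <;> simp at h h' <;> first | simp | exact Limits.zero_comp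

/-- The projective resolution of `M` given by a short exact sequence `0 → K → P → M → 0` with `K` and
`P` projective. -/
noncomputable def resolution {A : Type 1} [Category.{0} A] [Abelian A] {K P M : A}
    (i : K ⟶ P) (p : P ⟶ M) (w : i ≫ p = 0)
    (h : (ShortComplex.mk i p w).ShortExact) [Projective K] [Projective P] :
    ProjectiveResolution M where
  complex := twoTerm i
  projective := by
    rintro (_ | _ | n)
    · assumption
    · assumption
    · exact Limits.IsZero.projective (Limits.isZero_zero A)
  π := (ChainComplex.toSingle₀Equiv _ _).symm ⟨p, w⟩
  quasiIso := ⟨fun n => by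
    cases n
    · rw [ChainComplex.quasiIsoAt₀_iff, ShortComplex.quasiIso_iff_of_zeros']
      · refine (ShortComplex.exact_and_epi_g_iff_of_iso ?_).2 ⟨h.exact, h.epi_g⟩
        refine ShortComplex.isoMk (Iso.refl _) (Iso.refl _) (Iso.refl _)
          ((Category.id_comp _).trans (Category.comp_id _).symm)
          ?_
        have h0 := ChainComplex.toSingle₀Equiv_symm_apply_f_zero (C := twoTerm i) (X := M) p w
        refine (Category.id_comp _).trans (h0.symm.trans ?_)
        exact (Category.comp_id
          ((((twoTerm i).toSingle₀Equiv M).symm ⟨p, w⟩).f 0)).symm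
      all_goals rfl
    · rename_i n
      rw [quasiIsoAt_iff_exactAt']
      · rw [HomologicalComplex.exactAt_iff' _ (n + 1 + 1) (n + 1) n (by simp) (by simp)]
        match n with
        | 0 =>
          refine (ShortComplex.exact_iff_mono _ rfl).2 h.mono_f
        | n + 1 =>
          exact ShortComplex.exact_of_isZero_X₂ _ (Limits.isZero_zero A)
      · apply ChainComplex.exactAt_succ_single_obj⟩

/-- The homology of a short complex of modules is the quotient of the kernel of `g` by the image
of `f`. -/
lemma exists_homology_presentation {R : Type} [CommRing R] (S : ShortComplex (ModuleCat.{0} R)) :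
    ∃ π : LinearMap.ker S.g.hom →ₗ[R] S.homology, Function.Surjective π ∧
      ∀ z, π z = 0 ↔ ∃ x : S.X₁, S.f x = (z : S.X₂) := by
  refine ⟨S.moduleCatHomologyIso.inv.hom ∘ₗ
    (LinearMap.range S.moduleCatToCycles).mkQ, ?_, fun z ↦ ?_⟩
  · intro x
    obtain ⟨y, rfl⟩ := (ModuleCat.epi_iff_surjective S.moduleCatHomologyIso.inv).mp inferInstance x
    obtain ⟨z, hz⟩ := Submodule.mkQ_surjective (LinearMap.range S.moduleCatToCycles) y
    exact ⟨z, congrArg S.moduleCatHomologyIso.inv hz⟩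
  · have hinj : Function.Injective S.moduleCatHomologyIso.inv :=
      (ModuleCat.mono_iff_injective _).mp inferInstance
    have h1 : S.moduleCatHomologyIso.inv.hom ((LinearMap.range S.moduleCatToCycles).mkQ z) = 0 ↔
        (LinearMap.range S.moduleCatToCycles).mkQ z = 0 := map_eq_zero_iff _ hinj
    exact h1.trans ((Submodule.Quotient.mk_eq_zero _).trans
      (exists_congr fun x ↦ Subtype.ext_iff))

/-- If `0 → K → P → M → 0` is exact with `K` and `P` projective, then `Ext¹(M, G)` is the cokernel of
`Hom(P, G) → Hom(K, G)`. -/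
theorem exists_ext_presentation {R : Type} [CommRing R] {A : Type 1} [Category.{0} A] [Abelian A]
    [Linear R A] [EnoughProjectives A] {K P M : A} (i : K ⟶ P) (p : P ⟶ M) (w : i ≫ p = 0)
    (h : (ShortComplex.mk i p w).ShortExact) [Projective K] [Projective P] (G : A) :
    ∃ q : (K ⟶ G) →ₗ[R] ((Ext R A 1).obj (Opposite.op M)).obj G,
      Function.Surjective q ∧ ∀ ψ, q ψ = 0 ↔ ∃ χ : P ⟶ G, i ≫ χ = ψ := by
  let D := (twoTerm i).linearYonedaObj R G
  obtain ⟨π, hπ, hπ0⟩ := exists_homology_presentation (D.sc' 0 1 2)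
  let e : ((Ext R A 1).obj (Opposite.op M)).obj G ≅ (D.sc' 0 1 2).homology :=
    (resolution i p w h).isoExt 1 G ≪≫ D.homologyIsoSc' 0 1 2 (by simp) (by simp)
  have hg : ∀ ψ : K ⟶ G, (D.sc' 0 1 2).g.hom ψ = 0 := fun ψ ↦ by
    change (twoTerm i).d 2 1 ≫ ψ = 0
    exact Limits.zero_comp
  have hinj : Function.Injective e.inv := (ModuleCat.mono_iff_injective _).mp inferInstance
  let k : (K ⟶ G) →ₗ[R] LinearMap.ker (D.sc' 0 1 2).g.hom :=
    LinearMap.codRestrict (M₂ := (D.sc' 0 1 2).X₂) _ (LinearMap.id (M := (K ⟶ G))) hg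
  refine ⟨e.inv.hom ∘ₗ π ∘ₗ k, ?_, fun ψ ↦ ?_⟩
  · refine ((ModuleCat.epi_iff_surjective e.inv).mp inferInstance).comp (hπ.comp ?_)
    rintro ⟨z, hz⟩
    exact ⟨z, rfl⟩
  · have h1 : e.inv.hom (π (k ψ)) = 0 ↔ π (k ψ) = 0 := map_eq_zero_iff _ hinj
    rw [LinearMap.comp_apply, LinearMap.comp_apply, h1, hπ0]
    exact Iff.rfl


lemma exists_factor {R A B M : Type} [CommRing R] [AddCommGroup A] [AddCommGroup B]
    [AddCommGroup M] [Module R A] [Module R B] [Module R M] (p : A →ₗ[R] B)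
    (hp : Function.Surjective p) (u : A →ₗ[R] M) (h : ∀ x, p x = 0 → u x = 0) :
    ∃ g : B →ₗ[R] M, ∀ x, g (p x) = u x :=
  ⟨(LinearMap.ker p).liftQ u h ∘ₗ (p.quotKerEquivOfSurjective hp).symm.toLinearMap, fun x ↦ by
    have : (p.quotKerEquivOfSurjective hp).symm (p x) = (LinearMap.ker p).mkQ x := by
      rw [LinearEquiv.symm_apply_eq]; rfl
    rw [LinearMap.comp_apply, LinearEquiv.coe_coe, this]
    rfl⟩

/-! ### Cycles, cocycles and the exact sequence -/

/-- If subobjects of projectives are projective, the cycles of a short complex whose last term is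
projective are a direct summand of the middle term. -/
lemma exists_retraction {A : Type 1} [Category.{0} A] [Abelian A]
    (hered : ∀ {K F : A} (m : K ⟶ F) [Mono m] [Projective F], Projective K)
    (S : ShortComplex A) [Projective S.X₃] :
    ∃ r : S.X₂ ⟶ S.cycles, S.iCycles ≫ r = 𝟙 _ := by
  let e := Abelian.factorThruImage S.g
  have hw : S.iCycles ≫ e = 0 := by
    rw [← cancel_mono (Abelian.image.ι S.g), Category.assoc, Abelian.image.fac]
    simp
  have hex : (ShortComplex.mk S.iCycles e hw).ShortExact :=
    { exact := by
        refine ShortComplex.exact_of_f_is_kernel _ (Limits.KernelFork.IsLimit.ofι' _ _ ?_)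
        intro A k hk
        refine ⟨S.liftCycles k ?_, S.liftCycles_i _ _⟩
        rw [← Abelian.image.fac S.g, ← Category.assoc, hk, Limits.zero_comp]
      mono_f := inferInstanceAs (Mono S.iCycles)
      epi_g := inferInstanceAs (Epi (Abelian.factorThruImage S.g)) }
  have : Projective (ShortComplex.mk S.iCycles e hw).X₃ := hered (Abelian.image.ι S.g)
  exact ⟨hex.splittingOfProjective.r, hex.splittingOfProjective.f_r⟩

/-- The universal coefficient sequence in the middle degree of `X → Y → Z → W`, where `Y` is the
`n`-th term: the cocycles are those of `Hom(Z, G) → Hom(Y, G) → Hom(X, G)`. -/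
theorem exists_shortExact {R : Type} [CommRing R] {A : Type 1} [Category.{0} A] [Abelian A]
    [Linear R A] [EnoughProjectives A]
    (hered : ∀ {K F : A} (m : K ⟶ F) [Mono m] [Projective F], Projective K)
    {X Y Z W : A} (a : X ⟶ Y) (b : Y ⟶ Z) (c : Z ⟶ W) (hab : a ≫ b = 0)
    (hbc : b ≫ c = 0) [Projective Z] [Projective W] (G : A) :
    ∃ (f : ((Ext R A 1).obj (Opposite.op (ShortComplex.mk b c hbc).homology)).obj G ⟶
        ((ShortComplex.mk a b hab).op.map ((linearYoneda R A).obj G)).homology)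
      (g : ((ShortComplex.mk a b hab).op.map ((linearYoneda R A).obj G)).homology ⟶
        ModuleCat.of R ((ShortComplex.mk a b hab).homology ⟶ G))
      (w : f ≫ g = 0), (ShortComplex.mk f g w).ShortExact := by
  let S := ShortComplex.mk a b hab
  let T := ShortComplex.mk b c hbc
  let S' := S.op.map ((linearYoneda R A).obj G)
  have : Projective S.X₃ := ‹Projective Z›
  have : Projective T.X₃ := ‹Projective W›
  obtain ⟨rS, hrS⟩ := exists_retraction hered S
  obtain ⟨rT, hrT⟩ := exists_retraction hered T
  -- `kernel T.homologyπ` is the object of boundaries, through which `b` factors as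
  -- `e ≫ i ≫ T.iCycles`
  let i := Limits.kernel.ι T.homologyπ
  let e : Y ⟶ Limits.kernel T.homologyπ :=
    Limits.kernel.lift T.homologyπ T.toCycles T.toCycles_comp_homologyπ
  have he : e ≫ i = T.toCycles := Limits.kernel.lift_ι _ _ _
  have heb : e ≫ i ≫ T.iCycles = b := by
    rw [← Category.assoc, he]; exact T.toCycles_i
  have : Epi e := by
    have hex : (ShortComplex.mk T.toCycles T.homologyπ T.toCycles_comp_homologyπ).Exact :=
      ShortComplex.exact_of_g_is_cokernel _ T.homologyIsCokernel
    exact hex.epi_kernelLift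
  have : Projective T.X₂ := ‹Projective Z›
  have : Projective T.cycles := hered T.iCycles
  have : Projective (Limits.kernel T.homologyπ) := hered i
  have hA : (ShortComplex.mk i T.homologyπ (Limits.kernel.condition _)).ShortExact :=
    { exact := ShortComplex.exact_of_f_is_kernel _ (Limits.kernelIsKernel _)
      mono_f := inferInstanceAs (Mono (Limits.kernel.ι T.homologyπ))
      epi_g := inferInstanceAs (Epi T.homologyπ) }
  obtain ⟨q, hq, hq0⟩ := exists_ext_presentation (R := R) i T.homologyπ
    (Limits.kernel.condition _) hA G
  obtain ⟨π, hπ, hπ0⟩ := exists_homology_presentation S'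
  have hae : a ≫ e = 0 := by
    rw [← cancel_mono i, ← cancel_mono T.iCycles]
    simp only [Category.assoc, heb, hab, Limits.zero_comp]
  -- a cochain on the boundaries gives a cocycle by precomposition with `e`
  let k : (Limits.kernel T.homologyπ ⟶ G) →ₗ[R] LinearMap.ker S'.g.hom :=
    LinearMap.codRestrict (M₂ := S'.X₂) _ (Linear.leftComp R G e) fun ψ ↦ by
      change a ≫ e ≫ ψ = 0
      rw [← Category.assoc, hae, Limits.zero_comp]
  have hta (φ : LinearMap.ker S'.g.hom) :
      S.toCycles ≫ S.iCycles ≫ (φ.1 : Y ⟶ G) = 0 := by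
    have aux (φ : S.X₂ ⟶ G) (h : S.f ≫ φ = 0) : S.toCycles ≫ S.iCycles ≫ φ = 0 := by
      rw [← Category.assoc, S.toCycles_i, h]
    exact aux φ.1 φ.2
  -- a cocycle, restricted to the cycles, descends to homology
  let u : LinearMap.ker S'.g.hom →ₗ[R] (S.homology ⟶ G) :=
    { toFun φ := S.descHomology (S.iCycles ≫ (φ.1 : Y ⟶ G)) (hta φ)
      map_add' φ φ' := by
        rw [← cancel_epi S.homologyπ, Preadditive.comp_add]
        simp only [ShortComplex.π_descHomology]
        exact Preadditive.comp_add _ _ _ _ _ _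
      map_smul' r φ := by
        rw [← cancel_epi S.homologyπ, RingHom.id_apply, Linear.comp_smul]
        simp only [ShortComplex.π_descHomology]
        exact Linear.comp_smul _ _ _ _ _ _ }
  have hu (φ : LinearMap.ker S'.g.hom) :
      S.homologyπ ≫ u φ = S.iCycles ≫ (φ.1 : Y ⟶ G) := S.π_descHomology _ _
  -- an extension along `i` is the same as an extension along `i ≫ T.iCycles`
  have hk0 (ψ) : π (k ψ) = 0 ↔ q ψ = 0 := by
    rw [hπ0, hq0]
    constructor
    · rintro ⟨χ, hχ⟩
      have aux (χ : T.X₂ ⟶ G) (h : T.f ≫ χ = e ≫ ψ) : i ≫ T.iCycles ≫ χ = ψ := by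
        rw [← cancel_epi e, ← h, ← T.toCycles_i, ← he]
        simp only [Category.assoc]
      exact ⟨_, aux χ hχ⟩
    · rintro ⟨χ, rfl⟩
      refine ⟨(rT ≫ χ : Z ⟶ G), ?_⟩
      change b ≫ rT ≫ χ = e ≫ i ≫ χ
      rw [← heb]
      simp only [Category.assoc, reassoc_of% hrT]
  have hu0 (φ) (h : π φ = 0) : u φ = 0 := by
    obtain ⟨χ, hχ⟩ := (hπ0 φ).1 h
    have aux (χ : S.X₃ ⟶ G) : S.iCycles ≫ S.g ≫ χ = 0 := by simp
    rw [← cancel_epi S.homologyπ, hu, ← hχ, Limits.comp_zero]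
    exact aux χ
  obtain ⟨f, hf⟩ := exists_factor q hq (π ∘ₗ k) fun ψ h ↦ (hk0 ψ).2 h
  obtain ⟨g, hg⟩ := exists_factor π hπ u hu0
  have huk (ψ) : u (k ψ) = 0 := by
    rw [← cancel_epi S.homologyπ, hu, Limits.comp_zero]
    change S.iCycles ≫ e ≫ ψ = 0
    have : S.iCycles ≫ e = 0 := by
      rw [← cancel_mono i, ← cancel_mono T.iCycles]
      simp only [Category.assoc, heb, Limits.zero_comp]
      exact S.iCycles_g
    rw [← Category.assoc, this, Limits.zero_comp]
  have w : ModuleCat.ofHom f ≫ ModuleCat.ofHom (Y := (S.homology ⟶ G)) g = 0 := by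
    refine ModuleCat.hom_ext (LinearMap.ext fun x ↦ ?_)
    obtain ⟨ψ, rfl⟩ := hq x
    change g (f (q ψ)) = 0
    rw [hf, LinearMap.comp_apply, hg, huk]
  refine ⟨ModuleCat.ofHom f, ModuleCat.ofHom g, w, ?_⟩
  refine { exact := ?_, mono_f := ?_, epi_g := ?_ }
  · rw [ShortComplex.moduleCat_exact_iff]
    intro y hy
    obtain ⟨φ, rfl⟩ := hπ y
    have h0 : u φ = 0 := by rw [← hg]; exact hy
    have h1 : S.iCycles ≫ (φ.1 : Y ⟶ G) = 0 := by rw [← hu, h0, Limits.comp_zero]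
    have h2 : Limits.kernel.ι e ≫ (φ.1 : Y ⟶ G) = 0 := by
      have h3 : Limits.kernel.ι e ≫ S.g = 0 := by
        change Limits.kernel.ι e ≫ b = 0
        rw [← heb, Limits.kernel.condition_assoc, Limits.zero_comp]
      have aux (φ : S.X₂ ⟶ G) (h : S.iCycles ≫ φ = 0) : Limits.kernel.ι e ≫ φ = 0 := by
        rw [← S.liftCycles_i _ h3, Category.assoc, h, Limits.comp_zero]
      exact aux φ.1 h1
    -- a cocycle vanishing on cycles factors through the epimorphism `e` onto the boundaries
    refine ⟨q (Abelian.epiDesc e _ h2), ?_⟩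
    change f (q _) = π φ
    rw [hf]
    exact congrArg π (Subtype.ext (Abelian.comp_epiDesc e _ h2))
  · rw [ModuleCat.mono_iff_injective]
    refine (injective_iff_map_eq_zero f).2 fun x hx ↦ ?_
    obtain ⟨ψ, rfl⟩ := hq x
    rw [hf] at hx
    exact (hk0 ψ).1 hx
  · rw [ModuleCat.epi_iff_surjective]
    intro α
    -- `β` extends to a cocycle through the retraction onto the cycles
    let β : S.homology ⟶ G := α
    let φ : LinearMap.ker S'.g.hom := ⟨(rS ≫ S.homologyπ ≫ β : Y ⟶ G), by
      change S.f ≫ rS ≫ S.homologyπ ≫ β = 0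
      rw [← S.toCycles_i, Category.assoc, reassoc_of% hrS, ← Category.assoc,
        S.toCycles_comp_homologyπ, Limits.zero_comp]⟩
    refine ⟨π φ, ?_⟩
    refine (hg φ).trans ?_
    change u φ = β
    rw [← cancel_epi S.homologyπ, hu]
    change S.iCycles ≫ rS ≫ S.homologyπ ≫ β = S.homologyπ ≫ β
    rw [reassoc_of% hrS]

end UCT

/-- The universal coefficient theorem for cohomology (Eilenberg–Mac Lane): for a chain complex
`C` of abelian groups (`ℤ`-modules) with all terms free and an abelian group `G`, for every
integer `n` there is a short exact sequence
`0 → Ext¹_ℤ(H_{n−1}(C), G) → H^n(Hom(C, G)) → Hom_ℤ(H_n(C), G) → 0`,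
where `Hom(C, G)` is the cochain complex with `n`-th term `Hom_ℤ(C_n, G)` obtained by applying
the contravariant functor `Hom_ℤ(−, G)` to `C`. -/
theorem universal_coefficients_for_cohomology
    (C : ChainComplex (ModuleCat ℤ) ℤ) (hC : ∀ n : ℤ, Module.Free ℤ (C.X n))
    (G : ModuleCat ℤ) (n : ℤ) :
    ∃ (f : ((Ext ℤ (ModuleCat ℤ) 1).obj (Opposite.op (C.homology (n - 1)))).obj G ⟶
        ((((linearYoneda ℤ (ModuleCat ℤ)).obj G).mapHomologicalComplex
          (ComplexShape.down ℤ).symm).obj C.op).homology n)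
      (g : ((((linearYoneda ℤ (ModuleCat ℤ)).obj G).mapHomologicalComplex
          (ComplexShape.down ℤ).symm).obj C.op).homology n ⟶
        ModuleCat.of ℤ (C.homology n ⟶ G))
      (w : f ≫ g = 0),
      (ShortComplex.mk f g w).ShortExact := by
  have hP (m : ℤ) : Projective (C.X m) := by
    have := hC m
    exact ModuleCat.projective_of_categoryTheory_projective _
  have := hP (n - 1)
  have := hP (n - 1 - 1)
  obtain ⟨f, g, w, h⟩ := UCT.exists_shortExact (R := ℤ) UCT.projective_of_mono
    (C.d (n + 1) n) (C.d n (n - 1)) (C.d (n - 1) (n - 1 - 1))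
    (C.d_comp_d _ _ _) (C.d_comp_d _ _ _) G
  let D := (((linearYoneda ℤ (ModuleCat ℤ)).obj G).mapHomologicalComplex
          (ComplexShape.down ℤ).symm).obj C.op
  have hprev (m : ℤ) : (ComplexShape.down ℤ).prev m = m + 1 := by simp
  have hnext (m : ℤ) : (ComplexShape.down ℤ).next m = m - 1 := by simp
  let e₁ : C.homology (n - 1) ≅ (ShortComplex.mk (C.d n (n - 1)) (C.d (n - 1) (n - 1 - 1))
      (C.d_comp_d _ _ _)).homology :=
    C.homologyIsoSc' n (n - 1) (n - 1 - 1) (by simp) (by simp)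
  let e₂ : C.homology n ≅ (ShortComplex.mk (C.d (n + 1) n) (C.d n (n - 1))
      (C.d_comp_d _ _ _)).homology :=
    C.homologyIsoSc' (n + 1) n (n - 1) (by simp) (by simp)
  let e₃ : D.homology n ≅ ((ShortComplex.mk (C.d (n + 1) n) (C.d n (n - 1))
      (C.d_comp_d _ _ _)).op.map ((linearYoneda ℤ (ModuleCat ℤ)).obj G)).homology :=
    D.homologyIsoSc' (n - 1) n (n + 1) (hnext n) (hprev n)
  let i₁ := ((Ext ℤ (ModuleCat ℤ) 1).mapIso e₁.op).app G
  let i₂ : ModuleCat.of ℤ ((ShortComplex.mk (C.d (n + 1) n) (C.d n (n - 1))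
      (C.d_comp_d _ _ _)).homology ⟶ G) ≅ ModuleCat.of ℤ (C.homology n ⟶ G) :=
    ((linearYoneda ℤ (ModuleCat ℤ)).obj G).mapIso e₂.op
  have w' : (i₁.inv ≫ f ≫ e₃.inv) ≫ (e₃.hom ≫ g ≫ i₂.hom) = 0 := by
    simp [reassoc_of% w]
  refine ⟨i₁.inv ≫ f ≫ e₃.inv, e₃.hom ≫ g ≫ i₂.hom, w', ?_⟩
  refine ShortComplex.shortExact_of_iso
    (ShortComplex.isoMk i₁ e₃.symm i₂ ?_ ?_) h
  · simp
  · simp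
end

section
/- Let R be a commutative Noetherian local ring with maximal ideal m and residue field κ = R/m. Then R is a regular local ring if and only if κ has finite projective dimension as an R-module, i.e., κ admits a finite resolution by projective R-modules. -/
/-!
The two halves of the theorem are both inductions that replace a Noetherian local ring `(R, m)`
by `R/(x)` for a well-chosen `x ∈ m \ m²`, supplied by prime avoidance. Such an `x` can be
exchanged into a minimal generating set of `m`, so the embedding dimension drops by exactly one.

*Regular implies finite projective dimension.* If `R` is regular of positive dimension, choose `x`
outside all minimal primes. Then `R/(x)` is regular of dimension one less, hence a domain by
induction; so `(x)` is prime, and a minimal prime `p ⊆ (x)` satisfies `p = x p`, whence `p = 0` by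
Nakayama. Thus `R` is a domain, `x` is a nonzerodivisor, and lifting a regular sequence that
generates the maximal ideal of `R/(x)` gives one that generates `m`. The quotient of `R` by a
regular sequence has projective dimension equal to the length of the sequence.

*Finite projective dimension implies regular.* If `m` is an associated prime, some `s ≠ 0` is
killed by `m`. The first syzygy of a minimal free cover lies in `m F`, so it is killed by `s`; a
free module killed by `s` is zero, so every finite module of finite projective dimension is free.
In particular `R/m` is free and `R` is a field. Otherwise choose `x` to be a nonzerodivisor. Then
`m` has finite projective dimension over `R`, hence `m/xm` has finite projective dimension over
`R/(x)`. Because `x ∉ m²`, the maximal ideal `m/(x)` of `R/(x)` is a direct summand of `m/xm`, so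
the residue field has finite projective dimension over `R/(x)` too. By induction `R/(x)` is
regular, and `m` is generated by `dim R/(x) + 1 = dim R` elements.

Projective dimension is handled through the vanishing of `Ext`; the passage to an honest resolution
with finitely many nonzero terms splices short exact sequences.
-/

open CategoryTheory

/-- The minimal number of generators of an ideal `I` of a commutative ring. -/
noncomputable def Ideal.minNumGenerators {R : Type u} [CommRing R] (I : Ideal R) : ℕ :=
  sInf {n : ℕ | ∃ s : Finset R, s.card = n ∧ Ideal.span (s : Set R) = I}

/-! ### Bounded projective resolutions and projective dimension -/

section Res
open CategoryTheory.Limits CategoryTheory.Abelian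

variable {C : Type*} [Category.{v} C] [Abelian C]

/-- A class in `Ext` of degree greater than `n` is represented by a morphism out of a term of the
resolution of index greater than `n`, hence vanishes. -/
lemma hasProjectiveDimensionLT_of_bounded [HasExt.{w} C] {M : C} (P : ProjectiveResolution M)
    (n : ℕ) (h : ∀ m, n < m → IsZero (P.complex.X m)) : HasProjectiveDimensionLT M (n + 1) := by
  rw [hasProjectiveDimensionLT_iff.{w}]
  intro i hi Y e
  obtain ⟨f, hf, rfl⟩ := P.extMk_surjective e (i + 1) rfl
  obtain rfl : f = 0 := (h i (by omega)).eq_of_src _ _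
  simp

lemma exists_augmentation {Z : C} (P : ProjectiveResolution Z) :
    ∃ (ε : P.complex.X 0 ⟶ Z) (w : P.complex.d 1 0 ≫ ε = 0),
      Epi ε ∧ (ShortComplex.mk _ _ w).Exact :=
  ⟨P.π.f 0, P.complex_d_comp_π_f_zero, inferInstanceAs (Epi (P.π.f 0)),
    ShortComplex.exact_of_g_is_cokernel
      (ShortComplex.mk _ _ P.complex_d_comp_π_f_zero) P.isColimitCokernelCofork⟩

/-- The projective resolution of `Z` given by a complex of projectives `K` together with an
augmentation `ε : K.X 0 ⟶ Z` making the augmented complex exact. -/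
noncomputable def resolutionOfAugmentation {Z : C} (K : ChainComplex C ℕ)
    (hK : ∀ n, Projective (K.X n)) (ε : K.X 0 ⟶ Z) (w : K.d 1 0 ≫ ε = 0) (hε : Epi ε)
    (h₀ : (ShortComplex.mk _ _ w).Exact) (h : ∀ n, K.ExactAt (n + 1)) :
    ProjectiveResolution Z where
  complex := K
  π := (ChainComplex.toSingle₀Equiv _ _).symm ⟨ε, w⟩
  quasiIso := ⟨fun n => by
    cases n
    · rw [ChainComplex.quasiIsoAt₀_iff, ShortComplex.quasiIso_iff_of_zeros']
      · refine (ShortComplex.exact_and_epi_g_iff_of_iso ?_).2 ⟨h₀, hε⟩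
        exact ShortComplex.isoMk (Iso.refl _) (Iso.refl _) (Iso.refl _)
          ((Category.id_comp (K.d 1 0)).trans (Category.comp_id (K.d 1 0)).symm)
          (by
            simp only [HomologicalComplex.shortComplexFunctor'_map_τ₂,
              ChainComplex.toSingle₀Equiv_symm_apply_f_zero]
            exact (Category.id_comp ε).trans (Category.comp_id ε).symm)
      · exact K.shape _ _ (by simp)
      all_goals rfl
    · rw [quasiIsoAt_iff_exactAt']
      · apply h
      · apply ChainComplex.exactAt_succ_single_obj⟩

/-- A resolution of the kernel of an epimorphism from a projective object can be spliced to a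
resolution of the target, shifting the terms by one. -/
lemma exists_splice {S : ShortComplex C} (hS : S.ShortExact)
    [Projective S.X₂] (P : ProjectiveResolution S.X₁) :
    ∃ Q : ProjectiveResolution S.X₃, ∀ n, Q.complex.X (n + 1) = P.complex.X n := by
  obtain ⟨ε, w, hε, h₀⟩ := exists_augmentation P
  have := hS.mono_f
  have w₁ : P.complex.d 1 0 ≫ ε ≫ S.f = 0 := by rw [reassoc_of% w, zero_comp]
  have w₂ : (ε ≫ S.f) ≫ S.g = 0 := by simp
  refine ⟨resolutionOfAugmentation (P.complex.augment (ε ≫ S.f) w₁)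
    (fun | 0 => (inferInstance : Projective S.X₂) | n + 1 => P.projective n) S.g w₂ hS.epi_g
    ?_ ?_, fun n => rfl⟩
  · let α : ShortComplex.mk (ε ≫ S.f) S.g w₂ ⟶ S :=
      { τ₁ := ε
        τ₂ := 𝟙 _
        τ₃ := 𝟙 _ }
    have : IsIso α.τ₂ := inferInstanceAs (IsIso (𝟙 _))
    have : Mono α.τ₃ := inferInstanceAs (Mono (𝟙 _))
    exact (ShortComplex.exact_iff_of_epi_of_isIso_of_mono α).2 hS.exact
  · intro n
    rw [HomologicalComplex.exactAt_iff' _ (n + 1 + 1) (n + 1) n (by simp) (by simp)]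
    match n with
    | 0 =>
      let β : ShortComplex.mk _ _ w ⟶ ShortComplex.mk (P.complex.d 1 0) (ε ≫ S.f) w₁ :=
        { τ₁ := 𝟙 _
          τ₂ := 𝟙 _
          τ₃ := S.f }
      have : Epi β.τ₁ := inferInstanceAs (Epi (𝟙 _))
      have : IsIso β.τ₂ := inferInstanceAs (IsIso (𝟙 _))
      have : Mono β.τ₃ := hS.mono_f
      exact (ShortComplex.exact_iff_of_epi_of_isIso_of_mono β).1 h₀
    | n + 1 => exact P.exact_succ n

lemma exists_bounded_resolution [EnoughProjectives C] (n : ℕ) (M : C)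
    (h : HasProjectiveDimensionLT M (n + 1)) :
    ∃ P : ProjectiveResolution M, ∀ m, n < m → IsZero (P.complex.X m) := by
  induction n generalizing M with
  | zero =>
    have : Projective M := projective_iff_hasProjectiveDimensionLT_one.2 h
    refine ⟨.self M, fun m hm => ?_⟩
    exact HomologicalComplex.isZero_single_obj_X _ _ _ _ hm.ne'
  | succ n ih =>
    let S : ShortComplex C := ShortComplex.mk (kernel.ι (Projective.π M)) (Projective.π M) (by simp)
    have hS : S.ShortExact :=
      { exact := ShortComplex.exact_of_f_is_kernel _ (kernelIsKernel _)
        mono_f := inferInstanceAs (Mono (kernel.ι _))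
        epi_g := inferInstanceAs (Epi (Projective.π M)) }
    have : Projective S.X₂ := inferInstanceAs (Projective (Projective.over M))
    obtain ⟨P, hP⟩ := ih S.X₁ ((hS.hasProjectiveDimensionLT_X₃_iff n this).1 h)
    obtain ⟨Q, hQ⟩ := exists_splice hS P
    refine ⟨Q, fun m hm => ?_⟩
    obtain _ | m := m
    · omega
    · rw [hQ]
      exact hP m (by omega)

end Res

/-! ### Finite modules over a local ring -/

section Alg
open IsLocalRing
open scoped TensorProduct

lemma minNumGenerators_eq_spanFinrank {R : Type u} [CommRing R] {I : Ideal R} (hI : I.FG) :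
    I.minNumGenerators = Submodule.spanFinrank I := by
  apply le_antisymm
  · have hf := Submodule.FG.finite_generators hI
    refine Nat.sInf_le ⟨hf.toFinset, ?_, ?_⟩
    · rw [← Submodule.FG.generators_ncard hI, Set.ncard_eq_toFinset_card _ hf]
    · simpa using Submodule.span_generators I
  · apply le_csInf
    · obtain ⟨s, hs⟩ := hI
      exact ⟨_, s, rfl, hs⟩
    · rintro n ⟨s, rfl, rfl⟩
      simpa using Submodule.spanFinrank_span_le_ncard_of_finite (R := R) s.finite_toSet

/-- A finite module over a local ring has a free cover whose kernel consists of vectors with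
coordinates in the maximal ideal: lift a basis of the fibre at the residue field. -/
lemma exists_minimal_cover {R : Type u} [CommRing R] [IsLocalRing R]
    (M : Type u) [AddCommGroup M] [Module R M] [Module.Finite R M] :
    ∃ (ι : Type u) (_ : Finite ι) (f : (ι →₀ R) →ₗ[R] M), Function.Surjective f ∧
      ∀ y, f y = 0 → ∀ i, y i ∈ maximalIdeal R := by
  let w := Module.Free.chooseBasis (ResidueField R) (ResidueField R ⊗[R] M)
  obtain ⟨v, hv⟩ := (TensorProduct.mk_surjective R M (ResidueField R)
    Ideal.Quotient.mk_surjective).comp_left w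
  have hv' : ∀ i, (1 : ResidueField R) ⊗ₜ[R] v i = w i := fun i => congr_fun hv i
  refine ⟨_, inferInstance, Finsupp.linearCombination R v, ?_, ?_⟩
  · rw [← LinearMap.range_eq_top, Finsupp.range_linearCombination]
    exact span_eq_top_of_tmul_eq_basis v w hv'
  · intro y hy i
    have h1 : ∑ j, residue R (y j) • w j = 0 := by
      rw [Finsupp.linearCombination_apply, Finsupp.sum_fintype _ _ (by simp)] at hy
      have := congr_arg (fun m => (1 : ResidueField R) ⊗ₜ[R] m) hy
      simp only [TensorProduct.tmul_sum, TensorProduct.tmul_smul, hv',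
        TensorProduct.tmul_zero] at this
      rw [← this]
      refine Finset.sum_congr rfl fun j _ => ?_
      exact algebraMap_smul (ResidueField R) (y j) (w j)
    have := Fintype.linearIndependent_iff.1 w.linearIndependent _ h1 i
    exact (residue_eq_zero_iff _).1 this

/-- Dimension shifting along `0 → X → Y → Z → 0` with `Y` projective, stated for linear maps. -/
lemma hasProjectiveDimensionLT_iff_of_exact {A : Type u} [CommRing A] {X Y Z : Type u}
    [AddCommGroup X] [Module A X] [AddCommGroup Y] [Module A Y] [AddCommGroup Z] [Module A Z]
    [Module.Projective A Y] (f : X →ₗ[A] Y) (g : Y →ₗ[A] Z) (hf : Function.Injective f)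
    (hfg : Function.Exact f g) (hg : Function.Surjective g) (n : ℕ) :
    HasProjectiveDimensionLT (ModuleCat.of A Z) (n + 2) ↔
      HasProjectiveDimensionLT (ModuleCat.of A X) (n + 1) := by
  let S : ShortComplex (ModuleCat.{u} A) :=
    ShortComplex.mk (ModuleCat.ofHom f) (ModuleCat.ofHom g) (by
      ext y
      exact hfg.apply_apply_eq_zero y)
  have hS : S.ShortExact :=
    { exact := (ShortComplex.ShortExact.moduleCat_exact_iff_function_exact S).2 hfg
      mono_f := (ModuleCat.mono_iff_injective _).2 hf
      epi_g := (ModuleCat.epi_iff_surjective _).2 hg }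
  have : Projective S.X₂ := (IsProjective.iff_projective (R := A) Y).1 inferInstance
  exact hS.hasProjectiveDimensionLT_X₃_iff n this

variable {R : Type u} [CommRing R] [IsNoetherianRing R] [IsLocalRing R]

/-- If a nonzero `s` annihilates the maximal ideal (that is, `R` has depth zero), every finite
module of finite projective dimension is free. -/
lemma free_of_socle {s : R} (hs0 : s ≠ 0) (hs : ∀ a ∈ maximalIdeal R, s * a = 0) (n : ℕ)
    (M : Type u) [AddCommGroup M] [Module R M] [Module.Finite R M]
    (h : HasProjectiveDimensionLT (ModuleCat.of R M) (n + 1)) : Module.Free R M := by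
  induction n generalizing M with
  | zero =>
    have := projective_iff_hasProjectiveDimensionLT_one.2 h
    rw [← IsProjective.iff_projective] at this
    exact Module.free_of_flat_of_isLocalRing
  | succ n ih =>
    obtain ⟨ι, _, f, hf, hk⟩ := exists_minimal_cover (R := R) M
    have hfree : Module.Free R (LinearMap.ker f) :=
      ih (LinearMap.ker f) ((hasProjectiveDimensionLT_iff_of_exact (LinearMap.ker f).subtype f
        Subtype.val_injective
        f.exact_subtype_ker_map hf n).1 h)
    have hker : LinearMap.ker f = ⊥ := by
      have b := Module.Free.chooseBasis R (LinearMap.ker f)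
      have hempty : IsEmpty (Module.Free.ChooseBasisIndex R (LinearMap.ker f)) := by
        refine ⟨fun i => hs0 ?_⟩
        -- The coordinates of `b i` lie in the maximal ideal, so `s` kills this basis vector.
        have h0 : s • b i = 0 := by
          ext j
          exact hs _ (hk _ (b i).2 j)
        simpa using congr_arg (fun z => b.repr z i) h0
      have := b.repr.toEquiv.subsingleton
      exact Submodule.subsingleton_iff_eq_bot.1 this
    exact Module.Free.of_equiv (LinearEquiv.ofBijective f ⟨LinearMap.ker_eq_bot.1 hker, hf⟩)

open Function in
/-- Reduction modulo an element `x` regular on both `R` and `M` does not raise projective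
dimension: a short exact sequence of `x`-regular modules stays exact modulo `x`. -/
lemma quotSMulTop_hasProjectiveDimensionLT {x : R} (hx : IsSMulRegular R x) (n : ℕ)
    (M : Type u) [AddCommGroup M] [Module R M] [Module.Finite R M] (hM : IsSMulRegular M x)
    (h : HasProjectiveDimensionLT (ModuleCat.of R M) (n + 1)) :
    HasProjectiveDimensionLT (ModuleCat.of (R ⧸ Ideal.span {x}) (QuotSMulTop x M)) (n + 1) := by
  induction n generalizing M with
  | zero =>
    have := projective_iff_hasProjectiveDimensionLT_one.2 h
    rw [← IsProjective.iff_projective] at this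
    have : Module.Free R M := Module.free_of_flat_of_isLocalRing
    apply projective_iff_hasProjectiveDimensionLT_one.1
    rw [← IsProjective.iff_projective]
    infer_instance
  | succ n ih =>
    obtain ⟨F, _, _, _, _, f, hf⟩ := Module.exists_finite_presentation R M
    have hF : IsSMulRegular F x := Module.Flat.isSMulRegular_of_nonZeroDivisors
      (isRegular_iff_mem_nonZeroDivisors.1 (isLeftRegular_iff_isRegular.1 (isLeftRegular_iff.2 hx)))
    have hK : IsSMulRegular (LinearMap.ker f) x := hF.submodule _ _
    have hpd := ih _ hK ((hasProjectiveDimensionLT_iff_of_exact (LinearMap.ker f).subtype f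
        Subtype.val_injective
      f.exact_subtype_ker_map hf n).1 h)
    have hsurj : Surjective (algebraMap R (R ⧸ Ideal.span {x})) := Ideal.Quotient.mk_surjective
    have ex : Exact (LinearMap.ker f).subtype f := LinearMap.exact_subtype_ker_map f
    have ex0 : Exact (0 : LinearMap.ker f →ₗ[R] LinearMap.ker f) (LinearMap.ker f).subtype := by
      rw [LinearMap.exact_zero_iff_injective]
      exact Subtype.val_injective
    have ex1 := QuotSMulTop.map_first_exact_on_four_term_exact_of_isSMulRegular_last ex0 ex hM
    have ex2 := QuotSMulTop.map_exact x ex hf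
    rw [map_zero, LinearMap.exact_zero_iff_injective] at ex1
    exact (hasProjectiveDimensionLT_iff_of_exact
      ((QuotSMulTop.map x (LinearMap.ker f).subtype).extendScalarsOfSurjective hsurj)
      ((QuotSMulTop.map x f).extendScalarsOfSurjective hsurj) ex1 ex2
      (QuotSMulTop.map_surjective x hf) n).2 hpd

end Alg

/-! ### Dividing by an element of the maximal ideal outside its square -/

section Param
open IsLocalRing

variable {R : Type u} [CommRing R] [IsLocalRing R]

lemma isLocalRing_quotient_span_singleton {x : R} (hx : x ∈ maximalIdeal R) :
    IsLocalRing (R ⧸ Ideal.span {x}) := by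
  have : Nontrivial (R ⧸ Ideal.span {x}) := Ideal.Quotient.nontrivial_iff.2 fun h =>
    (maximalIdeal.isMaximal R).ne_top (top_le_iff.1 (h ▸ (Ideal.span_singleton_le_iff_mem _).2 hx))
  exact .of_surjective' (Ideal.Quotient.mk _) Ideal.Quotient.mk_surjective

lemma map_mk_maximalIdeal (x : R) [IsLocalRing (R ⧸ Ideal.span {x})] :
    (maximalIdeal R).map (Ideal.Quotient.mk (Ideal.span {x})) =
      maximalIdeal (R ⧸ Ideal.span {x}) :=
  map_maximalIdeal_of_surjective _ Ideal.Quotient.mk_surjective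

variable [IsNoetherianRing R]

lemma spanFinrank_le_quotient_add_one {x : R} (hx : x ∈ maximalIdeal R)
    [IsLocalRing (R ⧸ Ideal.span {x})] : (maximalIdeal R).spanFinrank ≤
      (maximalIdeal (R ⧸ Ideal.span {x})).spanFinrank + 1 := by
  classical
  obtain ⟨s, hs, hspan⟩ := Submodule.FG.exists_span_finset_card_eq_spanFinrank
    (IsNoetherian.noetherian (maximalIdeal (R ⧸ Ideal.span {x})))
  let g := Function.surjInv (Ideal.Quotient.mk_surjective (I := Ideal.span {x}))
  have hg : ∀ y, Ideal.Quotient.mk (Ideal.span {x}) (g y) = y := Function.surjInv_eq _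
  have hm : maximalIdeal R = Ideal.span (insert x (s.image g) : Finset R) := by
    have h1 : (Ideal.span (s.image g : Set R)).map (Ideal.Quotient.mk (Ideal.span {x})) =
        maximalIdeal (R ⧸ Ideal.span {x}) := by
      rw [Ideal.map_span, ← hspan, Finset.coe_image, Set.image_image]
      simp [hg, Ideal.submodule_span_eq]
    have h2 := congr_arg (Ideal.comap (Ideal.Quotient.mk (Ideal.span {x}))) h1
    rw [← map_mk_maximalIdeal, Ideal.comap_map_of_surjective _ Ideal.Quotient.mk_surjective,
      Ideal.comap_map_of_surjective _ Ideal.Quotient.mk_surjective,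
      ← RingHom.ker_eq_comap_bot, Ideal.mk_ker,
      sup_eq_left.2 ((Ideal.span_singleton_le_iff_mem _).2 hx)] at h2
    rw [← h2, Finset.coe_insert, Ideal.span_insert, sup_comm]
  rw [← hs]
  calc _ = (Submodule.span R ((insert x (s.image g) : Finset R) : Set R)).spanFinrank := by
        rw [hm]
    _ ≤ _ := Submodule.spanFinrank_span_le_ncard_of_finite (Finset.finite_toSet _)
    _ ≤ _ := by
        rw [Set.ncard_coe_finset]
        exact (Finset.card_insert_le _ _).trans (Nat.succ_le_succ Finset.card_image_le)

/-- Since `x ∉ m²`, some coefficient of `x` on a minimal generating set `s` of `m` is a unit, so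
the corresponding generator becomes redundant modulo `x`. -/
lemma spanFinrank_quotient_add_one_le {x : R} (hx : x ∈ maximalIdeal R)
    (hx2 : x ∉ maximalIdeal R ^ 2) [IsLocalRing (R ⧸ Ideal.span {x})] :
    (maximalIdeal (R ⧸ Ideal.span {x})).spanFinrank + 1 ≤ (maximalIdeal R).spanFinrank := by
  classical
  obtain ⟨s, hs, hspan⟩ := Submodule.FG.exists_span_finset_card_eq_spanFinrank
    (IsNoetherian.noetherian (maximalIdeal R))
  have hsm : ∀ a ∈ s, a ∈ maximalIdeal R := fun a ha => hspan ▸ Submodule.subset_span ha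
  rw [← hspan, Submodule.mem_span_finset] at hx
  obtain ⟨f, -, hf⟩ := hx
  obtain ⟨a, ha, hfa⟩ : ∃ a ∈ s, f a ∉ maximalIdeal R := by
    by_contra! h
    refine hx2 (hf ▸ Ideal.sum_mem _ fun a ha => ?_)
    rw [pow_two, smul_eq_mul]
    exact Ideal.mul_mem_mul (h a ha) (hsm a ha)
  have hu : IsUnit (f a) := by simpa using hfa
  have hm : maximalIdeal (R ⧸ Ideal.span {x}) =
      Submodule.span _ ((s.erase a).image (Ideal.Quotient.mk (Ideal.span {x})) : Finset _) := by
    apply le_antisymm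
    · rw [← map_mk_maximalIdeal, ← hspan, Ideal.submodule_span_eq, Ideal.map_span,
        Ideal.submodule_span_eq, Ideal.span_le]
      rintro _ ⟨b, hb, rfl⟩
      have hmem : ∀ c ∈ s.erase a, Ideal.Quotient.mk (Ideal.span {x}) c ∈ Ideal.span
          (((s.erase a).image (Ideal.Quotient.mk (Ideal.span {x})) : Finset _) : Set _) :=
        fun c hc => Ideal.subset_span (by exact Finset.mem_coe.2 (Finset.mem_image_of_mem _ hc))
      by_cases hba : b = a
      · subst hba
        rw [SetLike.mem_coe, ← Ideal.unit_mul_mem_iff_mem _ (hu.map (Ideal.Quotient.mk _)),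
          ← map_mul]
        have h0 : f b * b = x - ∑ c ∈ s.erase b, f c * c := by
          rw [← hf, ← Finset.add_sum_erase s _ ha]
          simp
        rw [h0, map_sub, Ideal.Quotient.eq_zero_iff_mem.2 (Ideal.mem_span_singleton_self x),
          zero_sub, neg_mem_iff, map_sum]
        refine Ideal.sum_mem _ fun c hc => ?_
        rw [map_mul]
        exact Ideal.mul_mem_left _ _ (hmem c hc)
      · exact hmem b (Finset.mem_erase.2 ⟨hba, hb⟩)
    · rw [Submodule.span_le, ← map_mk_maximalIdeal]
      intro y hy
      obtain ⟨c, hc, rfl⟩ := Finset.mem_image.1 (Finset.mem_coe.1 hy)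
      exact Ideal.mem_map_of_mem _ (hsm c (Finset.mem_of_mem_erase hc))
  rw [← hs, ← Finset.card_erase_add_one ha, hm]
  refine Nat.succ_le_succ ?_
  refine (Submodule.spanFinrank_span_le_ncard_of_finite (Finset.finite_toSet _)).trans ?_
  rw [Set.ncard_coe_finset]
  exact Finset.card_image_le

/-- An element `x` of `m` outside `m²` has nonzero class in the cotangent space, so some functional
to the residue field takes the value `1` on it. -/
lemma exists_functional {x : R} (hx : x ∈ maximalIdeal R) (hx2 : x ∉ maximalIdeal R ^ 2) :
    ∃ φ : maximalIdeal R →ₗ[R] ResidueField R, φ ⟨x, hx⟩ = 1 := by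
  have h0 : (maximalIdeal R).toCotangent ⟨x, hx⟩ ≠ 0 := by
    rwa [Ne, Ideal.toCotangent_eq_zero]
  obtain ⟨ψ, hψ⟩ : ∃ ψ : Module.Dual (ResidueField R) (CotangentSpace R),
      ψ ((maximalIdeal R).toCotangent ⟨x, hx⟩) ≠ 0 := by
    by_contra! h
    exact h0 ((Module.forall_dual_apply_eq_zero_iff (ResidueField R) _).1 h)
  refine ⟨(((ψ ((maximalIdeal R).toCotangent ⟨x, hx⟩))⁻¹ • ψ).restrictScalars R).comp
    (maximalIdeal R).toCotangent, ?_⟩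
  simp [hψ]

/-- For `x ∈ m` outside `m²`, the maximal ideal of `R/(x)` is a retract of `m/xm` over `R/(x)`:
a functional `φ` on `m` with `φ x = 1` splits off the line spanned by the class of `x`, which is the
kernel of `m/xm → m/(x)`. So bounds on projective dimension pass to it. -/
lemma hasProjectiveDimensionLT_maximalIdeal_quotient {x : R} (hx : x ∈ maximalIdeal R)
    (hx2 : x ∉ maximalIdeal R ^ 2) [IsLocalRing (R ⧸ Ideal.span {x})] (n : ℕ)
    (h : HasProjectiveDimensionLT
      (ModuleCat.of (R ⧸ Ideal.span {x}) (QuotSMulTop x (maximalIdeal R))) n) :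
    HasProjectiveDimensionLT
      (ModuleCat.of (R ⧸ Ideal.span {x}) (maximalIdeal (R ⧸ Ideal.span {x}))) n := by
  obtain ⟨φ, hφ⟩ := exists_functional hx hx2
  let q : maximalIdeal R →ₗ[R] QuotSMulTop x (maximalIdeal R) := Submodule.mkQ _
  have hq : ∀ a : maximalIdeal R, q (x • a) = 0 := fun a =>
    (Submodule.Quotient.mk_eq_zero _).2 (Submodule.smul_mem_pointwise_smul _ _ _ trivial)
  let ψ : ResidueField R →ₗ[R] QuotSMulTop x (maximalIdeal R) :=
    Submodule.liftQ (maximalIdeal R) (LinearMap.toSpanSingleton R _ (q ⟨x, hx⟩)) (by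
      intro a ha
      rw [LinearMap.mem_ker, LinearMap.toSpanSingleton_apply, ← map_smul]
      convert hq ⟨a, ha⟩ using 2
      ext
      simp [mul_comm])
  have hψ : ∀ c : R, ψ (residue R c) = c • q ⟨x, hx⟩ := fun c => rfl
  -- `σ` projects away from the line through the class of `x`, so it factors through `m/(x)`.
  let σ : maximalIdeal R →ₗ[R] QuotSMulTop x (maximalIdeal R) := q - ψ.comp φ
  have hσ : σ ⟨x, hx⟩ = 0 := by
    have := hψ 1
    simp only [map_one, one_smul] at this
    simp [σ, hφ, this]
  have hmk : ∀ a ∈ maximalIdeal R,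
      Ideal.Quotient.mk (Ideal.span {x}) a ∈ maximalIdeal (R ⧸ Ideal.span {x}) := fun a ha =>
    map_mk_maximalIdeal x ▸ Ideal.mem_map_of_mem _ ha
  -- `p` is the projection of `m` onto `m/(x)`, along which `σ` descends to the section `i`.
  let p : maximalIdeal R →ₗ[R] maximalIdeal (R ⧸ Ideal.span {x}) :=
    { toFun := fun a => ⟨Ideal.Quotient.mk _ a, hmk a a.2⟩
      map_add' := fun a b => rfl
      map_smul' := fun a b => rfl }
  have hp : Function.Surjective p := by
    rintro ⟨y, hy⟩
    rw [← map_mk_maximalIdeal,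
      Ideal.mem_map_iff_of_surjective _ Ideal.Quotient.mk_surjective] at hy
    obtain ⟨a, ha, rfl⟩ := hy
    exact ⟨⟨a, ha⟩, rfl⟩
  have hpx : p ⟨x, hx⟩ = 0 :=
    Subtype.ext (Ideal.Quotient.eq_zero_iff_mem.2 (Ideal.mem_span_singleton_self x))
  have hker : LinearMap.ker p ≤ LinearMap.ker σ := by
    intro a ha
    have h1 : (a : R) ∈ Ideal.span {x} :=
      Ideal.Quotient.eq_zero_iff_mem.1 (congr_arg Subtype.val (LinearMap.mem_ker.1 ha))
    obtain ⟨c, hc⟩ := Ideal.mem_span_singleton'.1 h1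
    have h2 : a = c • (⟨x, hx⟩ : maximalIdeal R) := Subtype.ext hc.symm
    rw [LinearMap.mem_ker, h2, map_smul, hσ, smul_zero]
  let i : maximalIdeal (R ⧸ Ideal.span {x}) →ₗ[R] QuotSMulTop x (maximalIdeal R) :=
    ((LinearMap.ker p).liftQ σ hker).comp (p.quotKerEquivOfSurjective hp).symm.toLinearMap
  have hi : ∀ a, i (p a) = σ a := by
    intro a
    have : (p.quotKerEquivOfSurjective hp).symm (p a) = Submodule.Quotient.mk a := by
      rw [LinearEquiv.symm_apply_eq]
      rfl
    simp [i, this]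
  -- `r` is the natural map from `m/xm` to `m/(x)`.
  let r : QuotSMulTop x (maximalIdeal R) →ₗ[R] maximalIdeal (R ⧸ Ideal.span {x}) :=
    Submodule.liftQ _ p (by
      intro a ha
      obtain ⟨b, -, rfl⟩ := (Submodule.mem_smul_pointwise_iff_exists _ _ _).1 ha
      have : x • b = (b : R) • (⟨x, hx⟩ : maximalIdeal R) := Subtype.ext (mul_comm _ _)
      rw [LinearMap.mem_ker, this, map_smul, hpx, smul_zero])
  have hr : ∀ a, r (q a) = p a := fun a => rfl
  have hri : ∀ y, r (i y) = y := by
    intro y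
    obtain ⟨a, rfl⟩ := hp y
    obtain ⟨c, hc⟩ := residue_surjective (φ a)
    rw [hi, LinearMap.sub_apply, map_sub, hr, LinearMap.comp_apply, ← hc, hψ, map_smul, hr, hpx,
      smul_zero, sub_zero]
  have hsurj : Function.Surjective (algebraMap R (R ⧸ Ideal.span {x})) :=
    Ideal.Quotient.mk_surjective
  have ret : Retract
      (ModuleCat.of (R ⧸ Ideal.span {x}) (maximalIdeal (R ⧸ Ideal.span {x})))
      (ModuleCat.of (R ⧸ Ideal.span {x}) (QuotSMulTop x (maximalIdeal R))) :=
    { i := ModuleCat.ofHom (i.extendScalarsOfSurjective hsurj)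
      r := ModuleCat.ofHom (r.extendScalarsOfSurjective hsurj)
      retract := by
        ext y
        exact congr_arg Subtype.val (hri y) }
  exact ret.hasProjectiveDimensionLT n

end Param

/-! ### The two inductions -/

section Main
open IsLocalRing

variable {R : Type u} [CommRing R] [IsNoetherianRing R] [IsLocalRing R]

/-- Prime avoidance for `m²` and finitely many primes different from `m`. The hypothesis that `R` is
not a field ensures `m² ≠ m`; the ideal `m²` need not be prime. -/
lemma exists_mem_maximalIdeal_avoiding {S : Set (Ideal R)} (hS : S.Finite)
    (hprime : ∀ p ∈ S, p.IsPrime) (hm : maximalIdeal R ∉ S) (hF : ¬ IsField R) :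
    ∃ x ∈ maximalIdeal R, x ∉ maximalIdeal R ^ 2 ∧ ∀ p ∈ S, x ∉ p := by
  by_contra! h
  have hsub : (maximalIdeal R : Set R) ⊆
      ⋃ p ∈ insert (maximalIdeal R ^ 2) S, ((id p : Ideal R) : Set R) := by
    intro x hx
    by_cases hx2 : x ∈ maximalIdeal R ^ 2
    · exact Set.mem_biUnion (Set.mem_insert _ _) hx2
    · obtain ⟨p, hp, hxp⟩ := h x hx hx2
      exact Set.mem_biUnion (Set.mem_insert_of_mem _ hp) hxp
  obtain ⟨p, rfl | hp, hle⟩ := (Ideal.subset_union_prime_finite (f := id) (hS.insert _)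
    (maximalIdeal R ^ 2) (maximalIdeal R ^ 2)
    (fun p hp h1 _ => hprime p (hp.resolve_left h1))).1 hsub
  · exact ((maximalIdeal_sq_lt_maximalIdeal R).2 hF).not_ge hle
  · have := hprime p hp
    exact hm ((maximalIdeal.isMaximal R).eq_of_le this.ne_top hle ▸ hp)

lemma exists_nat_ringKrullDim (R : Type u) [CommRing R] [IsNoetherianRing R] [IsLocalRing R] :
    ∃ k : ℕ, ringKrullDim R = k := by
  obtain ⟨d, hd⟩ := WithBot.ne_bot_iff_exists.1 (ringKrullDim_ne_bot (R := R))
  have : d ≠ ⊤ := by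
    rintro rfl
    exact ringKrullDim_ne_top hd.symm
  obtain ⟨k, rfl⟩ := ENat.ne_top_iff_exists.1 this
  exact ⟨k, hd.symm⟩

/-- Dimension shifting along `0 → m → R → R/m → 0`. -/
lemma hasProjectiveDimensionLT_residueField_iff (R : Type u) [CommRing R] [IsLocalRing R] (n : ℕ) :
    HasProjectiveDimensionLT (ModuleCat.of R (ResidueField R)) (n + 2) ↔
      HasProjectiveDimensionLT (ModuleCat.of R (maximalIdeal R)) (n + 1) :=
  hasProjectiveDimensionLT_iff_of_exact (maximalIdeal R).subtype (maximalIdeal R).mkQ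
    Subtype.val_injective (LinearMap.exact_subtype_mkQ _) (Submodule.mkQ_surjective _) n

/-- The residue field is then free, and it is annihilated by `m`, so `m = 0`. -/
lemma isField_of_socle {s : R} (hs0 : s ≠ 0) (hs : ∀ a ∈ maximalIdeal R, s * a = 0) (n : ℕ)
    (h : HasProjectiveDimensionLT (ModuleCat.of R (ResidueField R)) (n + 1)) : IsField R := by
  have : Module.Free R (ResidueField R) := free_of_socle hs0 hs n _ h
  rw [isField_iff_maximalIdeal_eq, eq_bot_iff]
  intro a ha
  have := Module.Free.chooseBasis R (ResidueField R)
  have hne : Nonempty (Module.Free.ChooseBasisIndex R (ResidueField R)) := this.index_nonempty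
  obtain ⟨i⟩ := hne
  have h0 : a • this i = 0 := by
    rw [← algebraMap_smul (ResidueField R), ResidueField.algebraMap_eq,
      (residue_eq_zero_iff a).2 ha, zero_smul]
  simpa using congr_arg (fun z => this.repr z i) h0

lemma isRegularLocalRing_of_isField {R : Type u} [CommRing R] [IsLocalRing R]
    (h : IsField R) : IsRegularLocalRing R := by
  let := h.toField
  infer_instance

/-- Induction on a strict upper bound `k` for the Krull dimension. -/
theorem isRegularLocalRing_of_hasProjectiveDimensionLT (k : ℕ) (R : Type u) [CommRing R]
    [IsNoetherianRing R] [IsLocalRing R] (hk : ringKrullDim R < k) (n : ℕ)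
    (h : HasProjectiveDimensionLT (ModuleCat.of R (ResidueField R)) n) :
    IsRegularLocalRing R := by
  induction k generalizing R n with
  | zero => exact absurd (ringKrullDim_nonneg_of_nontrivial (R := R)) (not_le_of_gt hk)
  | succ k ih =>
    have hpd : HasProjectiveDimensionLT (ModuleCat.of R (ResidueField R)) (n + 2) :=
      hasProjectiveDimensionLT_of_ge _ n _ (by omega)
    by_cases hF : IsField R
    · exact isRegularLocalRing_of_isField hF
    -- If `m` were associated, then `R` would have depth zero and be a field.
    have hm : maximalIdeal R ∉ associatedPrimes R R := by
      intro hm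
      rw [AssociatedPrimes.mem_iff, isAssociatedPrime_iff] at hm
      obtain ⟨-, s, hs⟩ := hm
      refine hF (isField_of_socle (s := s) ?_ ?_ (n + 1) hpd)
      · rintro rfl
        exact (maximalIdeal.isMaximal R).ne_top (hs.trans (by simp))
      · intro a ha
        rw [hs, Submodule.mem_colon_singleton] at ha
        simpa [mul_comm] using ha
    obtain ⟨x, hx, hx2, hxS⟩ := exists_mem_maximalIdeal_avoiding (associatedPrimes.finite R R)
      (fun p hp => IsAssociatedPrime.isPrime hp) hm hF
    have hx0 : x ∈ nonZeroDivisors R := by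
      by_contra hx0
      have : x ∈ ⋃ p ∈ associatedPrimes R R, (p : Set R) := by
        rw [biUnion_associatedPrimes_eq_compl_nonZeroDivisors]
        exact hx0
      obtain ⟨p, hp, hxp⟩ := Set.mem_iUnion₂.1 this
      exact hxS p hp hxp
    have hreg : IsSMulRegular R x := Module.Flat.isSMulRegular_of_nonZeroDivisors hx0
    have := isLocalRing_quotient_span_singleton hx
    have h1 := (hasProjectiveDimensionLT_residueField_iff R n).1 hpd
    have h2 := quotSMulTop_hasProjectiveDimensionLT hreg n _ (hreg.submodule _ _) h1
    have h3 := hasProjectiveDimensionLT_maximalIdeal_quotient hx hx2 _ h2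
    have h4 := (hasProjectiveDimensionLT_residueField_iff (R ⧸ Ideal.span {x}) n).2 h3
    have hdim := ringKrullDim_quotient_span_singleton_succ_eq_ringKrullDim hreg hx
    obtain ⟨d, hd⟩ := exists_nat_ringKrullDim (R ⧸ Ideal.span {x})
    have hlt : ringKrullDim (R ⧸ Ideal.span {x}) < k := by
      rw [← hdim, hd] at hk
      rw [hd]
      norm_cast at hk ⊢
      omega
    have hR' := (isRegularLocalRing_iff _).1 (ih (R ⧸ Ideal.span {x}) hlt _ h4)
    have hle := spanFinrank_le_quotient_add_one hx
    apply IsRegularLocalRing.of_spanFinrank_maximalIdeal_le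
    rw [← hdim, ← hR']
    exact_mod_cast hle

open RingTheory.Sequence in
/-- The hypotheses say that `R` is regular of dimension `n`, since the Krull dimension is always at
most the number of generators of `m`. The conclusion that `R` is a domain is carried along because
it is what makes `x` a nonzerodivisor in the inductive step. -/
theorem exists_isWeaklyRegular_ofList_eq (n : ℕ) (R : Type u) [CommRing R]
    [IsNoetherianRing R] [IsLocalRing R] (h1 : (maximalIdeal R).spanFinrank ≤ n)
    (h2 : (n : WithBot ℕ∞) ≤ ringKrullDim R) :
    IsDomain R ∧ ∃ rs : List R, IsWeaklyRegular R rs ∧ Ideal.ofList rs = maximalIdeal R := by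
  induction n generalizing R with
  | zero =>
    have hbot : maximalIdeal R = ⊥ :=
      (Submodule.spanFinrank_eq_zero_iff_eq_bot (IsNoetherian.noetherian _)).1 (by omega)
    exact ⟨(isField_iff_maximalIdeal_eq.2 hbot).isDomain, [], .nil R R, by simp [hbot]⟩
  | succ n ih =>
    have hF : ¬ IsField R := fun hF => by
      rw [ringKrullDim_eq_zero_of_isField hF] at h2
      norm_cast at h2
    have hm : maximalIdeal R ∉ minimalPrimes R := fun hm => by
      rw [← maximalIdeal_height_eq_ringKrullDim, Ideal.height_eq_zero_iff.2 hm] at h2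
      norm_cast at h2
    obtain ⟨x, hx, hx2, hxS⟩ := exists_mem_maximalIdeal_avoiding
      (minimalPrimes.finite_of_isNoetherianRing R) (fun p hp => hp.1.1) hm hF
    have := isLocalRing_quotient_span_singleton hx
    have hle := spanFinrank_quotient_add_one_le hx hx2
    have hdim := ringKrullDim_le_ringKrullDim_quotient_add_card {x} (R := R) (by
      rw [ringJacobson_eq_maximalIdeal]
      simpa using hx)
    rw [Finset.coe_singleton, Finset.card_singleton] at hdim
    obtain ⟨d, hd⟩ := exists_nat_ringKrullDim (R ⧸ Ideal.span {x})
    obtain ⟨hdom, rs', hrs', hofl'⟩ := ih (R ⧸ Ideal.span {x}) (by omega) (by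
      have := h2.trans hdim
      rw [hd] at this ⊢
      norm_cast at this ⊢
      omega)
    have hprime : (Ideal.span {x}).IsPrime := (Ideal.Quotient.isDomain_iff_prime _).1 hdom
    obtain ⟨p, hp, hpx⟩ := Ideal.exists_minimalPrimes_le (bot_le : ⊥ ≤ Ideal.span {x})
    have hpp : p.IsPrime := hp.1.1
    -- `p` is contained in `(x)` but does not contain `x`, so `p = x p` and Nakayama applies.
    have hp0 : p = ⊥ := by
      refine Submodule.eq_bot_of_le_smul_of_le_jacobson_bot (Ideal.span {x}) p
        (IsNoetherian.noetherian _) (fun a ha => ?_)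
        (((Ideal.span_singleton_le_iff_mem _).2 hx).trans (maximalIdeal_le_jacobson _))
      obtain ⟨c, rfl⟩ := Ideal.mem_span_singleton'.1 (hpx ha)
      rw [mul_comm]
      exact Ideal.mul_mem_mul (Ideal.mem_span_singleton_self x)
        ((hpp.mem_or_mem ha).resolve_right (hxS p hp))
    have hR : IsDomain R := by
      have : (⊥ : Ideal R).IsPrime := hp0 ▸ hpp
      exact IsDomain.of_bot_isPrime R
    have hx0 : x ≠ 0 := by
      rintro rfl
      exact hx2 (Ideal.zero_mem _)
    refine ⟨hR, ?_⟩
    obtain ⟨rs, rfl⟩ := (List.map_surjective_iff.2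
      (Ideal.Quotient.mk_surjective (I := Ideal.span {x}))) rs'
    refine ⟨x :: rs, ?_, ?_⟩
    · rw [isWeaklyRegular_cons_iff]
      refine ⟨Module.Flat.isSMulRegular_of_nonZeroDivisors (mem_nonZeroDivisors_of_ne_zero hx0), ?_⟩
      have h5 := (isWeaklyRegular_map_algebraMap_iff (R ⧸ Ideal.span {x}) (R ⧸ Ideal.span {x})
        rs).1 hrs'
      open scoped Pointwise in
      have heq : (Ideal.span {x} : Ideal R) = x • (⊤ : Submodule R R) := by
        simp [← Submodule.ideal_span_singleton_smul]
      exact ((Submodule.quotEquivOfEq _ _ heq).isWeaklyRegular_congr rs).1 h5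
    · have h6 := congr_arg (Ideal.comap (Ideal.Quotient.mk (Ideal.span {x}))) hofl'
      rw [← map_mk_maximalIdeal, ← Ideal.map_ofList,
        Ideal.comap_map_of_surjective _ Ideal.Quotient.mk_surjective,
        Ideal.comap_map_of_surjective _ Ideal.Quotient.mk_surjective,
        ← RingHom.ker_eq_comap_bot, Ideal.mk_ker,
        sup_eq_left.2 ((Ideal.span_singleton_le_iff_mem _).2 hx)] at h6
      rw [← h6, Ideal.ofList_cons, sup_comm]

theorem exists_hasProjectiveDimensionLT_of_isRegularLocalRing (h : IsRegularLocalRing R) :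
    ∃ n, HasProjectiveDimensionLT (ModuleCat.of R (ResidueField R)) (n + 1) := by
  rw [isRegularLocalRing_iff] at h
  obtain ⟨-, rs, hrs, hm⟩ := exists_isWeaklyRegular_ofList_eq _ R le_rfl h.le
  have hreg : RingTheory.Sequence.IsRegular R rs :=
    .of_isWeaklyRegular_of_mem_maximalIdeal R
      (fun r hr => hm ▸ Ideal.subset_span hr) hrs
  have hpd := (ModuleCat.projectiveDimension_quotient_eq_length.{u} rs hreg).le
  rw [projectiveDimension_le_iff] at hpd
  let e : Shrink.{u} (R ⧸ Ideal.ofList rs) ≃ₗ[R] ResidueField R :=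
    (Shrink.linearEquiv R _).trans (Submodule.quotEquivOfEq _ _ hm)
  exact ⟨rs.length, ModuleCat.hasProjectiveDimensionLE_of_linearEquiv
    (M := ModuleCat.of R (Shrink.{u} (R ⧸ Ideal.ofList rs)))
    (N := ModuleCat.of R (ResidueField R)) e rs.length⟩

end Main

/-- The Auslander–Buchsbaum–Serre theorem: a commutative Noetherian local ring `R` with maximal
ideal `m` and residue field `κ = R/m` is regular (i.e. the minimal number of generators of `m`
equals the Krull dimension of `R`) if and only if `κ` has finite projective dimension as an
`R`-module, i.e. `κ` admits a projective resolution of finite length. -/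
theorem regular_iff_residueField_finite_projective_dimension
    (R : Type u) [CommRing R] [IsNoetherianRing R] [IsLocalRing R] :
    ((IsLocalRing.maximalIdeal R).minNumGenerators : WithBot ℕ∞) = ringKrullDim R ↔
      ∃ (P : ProjectiveResolution (ModuleCat.of R (IsLocalRing.ResidueField R))) (n : ℕ),
        ∀ m : ℕ, n < m → Limits.IsZero (P.complex.X m) := by
  rw [minNumGenerators_eq_spanFinrank (IsNoetherian.noetherian _), ← isRegularLocalRing_iff]
  constructor
  · intro h
    obtain ⟨n, hn⟩ := exists_hasProjectiveDimensionLT_of_isRegularLocalRing h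
    obtain ⟨P, hP⟩ := exists_bounded_resolution n _ hn
    exact ⟨P, n, hP⟩
  · rintro ⟨P, n, hP⟩
    obtain ⟨k, hk⟩ := exists_nat_ringKrullDim R
    refine isRegularLocalRing_of_hasProjectiveDimensionLT (k + 1) R ?_ (n + 1)
      (hasProjectiveDimensionLT_of_bounded P n hP)
    rw [hk]
    exact_mod_cast Nat.lt_succ_self k
end
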